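/- arXiv:1703.01628 — 2 statements merged into one kernel-verified Lean document; each statement's English description precedes it below -/
import Mathlib

section
/- For every n ∈ ℤ there is a unique bounded linear operator T_n on L²((0,∞), t dt) such that for every f ∈ L²((0,∞), t dt) and almost every t > 0 one has T_n f(t) = ∫₀^∞ K_n^α(t,t') f(t') sin α · t' dt', the integral converging absolutely; moreover there is a constant C > 0, depending only on α, such that the operator norm satisfies ‖T_n‖ ≤ C/(|n|+1) for all n ∈ ℤ. -/
open Real

/-- Parametrization of the infinite straight cone of opening angle `2α`. -/
noncomputable def coneParam (α t θ : ℝ) : EuclideanSpace ℝ (Fin 3) :=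
  !₂[sin α * t * cos θ, sin α * t * sin θ, cos α * t]

/-- Outward unit normal of the cone. -/
noncomputable def coneNormal (α θ : ℝ) : EuclideanSpace ℝ (Fin 3) :=
  !₂[cos α * cos θ, cos α * sin θ, -sin α]

/-- The layer-potential kernel of the infinite straight cone. -/
noncomputable def coneKernel (α t θ t' θ' : ℝ) : ℝ :=
  (inner ℝ (coneParam α t θ - coneParam α t' θ') (coneNormal α θ) : ℝ) /
    ‖coneParam α t' θ' - coneParam α t θ‖ ^ 3

/-- The `n`-th modal kernel `K_n^α(t,t') = (1/(2π)) ∫₀^{2π} e^{−inθ} K^{Γ_α}(t,θ,t',0) dθ`. -/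
noncomputable def modalKernel (α : ℝ) (n : ℤ) (t t' : ℝ) : ℂ :=
  ((1 / (2 * π) : ℝ) : ℂ) *
    ∫ θ in (0:ℝ)..(2 * π), Complex.exp (-Complex.I * (n : ℂ) * (θ : ℂ)) * (coneKernel α t θ t' 0 : ℂ)

open MeasureTheory

/-- The measure `t dt` on `(0, ∞)`. -/
noncomputable def muT : Measure ℝ :=
  (volume.restrict (Set.Ioi (0:ℝ))).withDensity fun t => ENNReal.ofReal t

/-!
In the angle `θ`, the cone kernel is a constant multiple of `(1 - cos θ) / d ^ 3`, where `d` is the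
distance between the two points. Integrating by parts twice over the period bounds its `n`-th
cosine coefficient by `3 / n ^ 2 * ∫ (1 - cos (n θ)) / d ^ 3`. The radial integrals of
`(t + s) / d ^ 3` are explicit: `(s - t) / d` is, up to a constant, a primitive, and they are
proportional to `1 / (t * (1 - cos θ))`. What remains is the integral `2 π |n|` of the Fejér
kernel `(1 - cos (n θ)) / (1 - cos θ)`, so the rows and columns of the `n`-th modal kernel have
integrals of order `1 / (|n| t)`, and the Schur test with weight `1 / t` applies.
-/

open Filter Topology
open scoped ENNReal NNReal

/-! ### Integral operators on `L²` and the Schur test -/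

section IntegralOperators

variable {X Y 𝕜 : Type*} [MeasurableSpace X] [MeasurableSpace Y] [RCLike 𝕜]
  {μ : Measure X} {ν : Measure Y}

/-- `T : L²(ν) → L²(μ)` is the integral operator with kernel `K`, given almost everywhere by an
absolutely convergent integral. -/
def IsIntegralOperator (K : X → Y → 𝕜) (T : Lp 𝕜 2 ν →L[𝕜] Lp 𝕜 2 μ) : Prop :=
  ∀ f : Lp 𝕜 2 ν, ∀ᵐ x ∂μ, Integrable (fun y => K x y * f y) ν ∧ T f x = ∫ y, K x y * f y ∂ν

theorem IsIntegralOperator.unique {K : X → Y → 𝕜} {T T' : Lp 𝕜 2 ν →L[𝕜] Lp 𝕜 2 μ}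
    (hT : IsIntegralOperator K T) (hT' : IsIntegralOperator K T') : T' = T := by
  ext1 f
  apply Lp.ext
  filter_upwards [hT f, hT' f] with x hx hx'
  rw [hx.2, hx'.2]

/-- The kernel `|K|` maps nonnegative functions of `L²(ν)` to `L²(μ)` with norm at most `A`.
Stated with `lintegral`, so that no integrability has to be assumed. -/
def AbsolutelyBoundedKernel (μ : Measure X) (ν : Measure Y) (K : X → Y → 𝕜) (A : ℝ≥0) : Prop :=
  ∀ f : Y → ℝ≥0∞, Measurable f →
    ∫⁻ x, (∫⁻ y, ‖K x y‖ₑ * f y ∂ν) ^ 2 ∂μ ≤ (A : ℝ≥0∞) ^ 2 * ∫⁻ y, f y ^ 2 ∂ν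

theorem sq_lintegral_mul_le_of_weight {k f q : Y → ℝ≥0∞} (hk : Measurable k) (hf : Measurable f)
    (hq : Measurable q) (hq_pos : ∀ᵐ y ∂ν, q y ≠ 0 ∧ q y ≠ ∞) :
    (∫⁻ y, k y * f y ∂ν) ^ 2 ≤ (∫⁻ y, k y * q y ∂ν) * ∫⁻ y, k y * (f y ^ 2 / q y) ∂ν := by
  have sq_sqrt (z : ℝ≥0∞) : (z ^ (1 / 2 : ℝ)) ^ (2 : ℝ) = z := by
    rw [← ENNReal.rpow_mul]; norm_num
  have hsplit : ∫⁻ y, k y * f y ∂ν =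
      ∫⁻ y, (k y * q y) ^ (1 / 2 : ℝ) * (k y * (f y ^ 2 / q y)) ^ (1 / 2 : ℝ) ∂ν := by
    refine lintegral_congr_ae ?_
    filter_upwards [hq_pos] with y hy
    have hprod : k y * q y * (k y * (f y ^ 2 / q y)) = (k y * f y) ^ (2 : ℝ) := by
      calc k y * q y * (k y * (f y ^ 2 / q y)) = k y ^ 2 * (q y * (f y ^ 2 / q y)) := by ring
        _ = (k y * f y) ^ (2 : ℝ) := by
            rw [ENNReal.mul_div_cancel hy.1 hy.2, ENNReal.rpow_two, mul_pow]
    rw [← ENNReal.mul_rpow_of_nonneg _ _ (by norm_num), hprod, ← ENNReal.rpow_mul]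
    norm_num
  have holder := ENNReal.lintegral_mul_le_Lp_mul_Lq ν Real.HolderConjugate.two_two
    (f := fun y => (k y * q y) ^ (1 / 2 : ℝ)) (g := fun y => (k y * (f y ^ 2 / q y)) ^ (1 / 2 : ℝ))
    (by fun_prop) (by fun_prop)
  simp only [Pi.mul_apply, sq_sqrt, ← hsplit] at holder
  calc (∫⁻ y, k y * f y ∂ν) ^ 2
      ≤ ((∫⁻ y, k y * q y ∂ν) ^ (1 / 2 : ℝ)
          * (∫⁻ y, k y * (f y ^ 2 / q y) ∂ν) ^ (1 / 2 : ℝ)) ^ 2 := by gcongr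
    _ = _ := by
        rw [← ENNReal.rpow_two, ENNReal.mul_rpow_of_nonneg _ _ (by norm_num), sq_sqrt, sq_sqrt]

theorem lintegral_sq_lintegral_mul_le_of_schur [SFinite μ] [SFinite ν] {k : X → Y → ℝ≥0∞}
    (hk : Measurable (Function.uncurry k)) {p : X → ℝ≥0∞} (hp : Measurable p) {q : Y → ℝ≥0∞}
    (hq : Measurable q) (hq_pos : ∀ᵐ y ∂ν, q y ≠ 0 ∧ q y ≠ ∞) {A B : ℝ≥0∞}
    (hrow : ∀ᵐ x ∂μ, ∫⁻ y, k x y * q y ∂ν ≤ A * p x)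
    (hcol : ∀ᵐ y ∂ν, ∫⁻ x, k x y * p x ∂μ ≤ B * q y) {f : Y → ℝ≥0∞} (hf : Measurable f) :
    ∫⁻ x, (∫⁻ y, k x y * f y ∂ν) ^ 2 ∂μ ≤ A * B * ∫⁻ y, f y ^ 2 ∂ν := by
  have hk_left (x : X) : Measurable (k x) := hk.of_uncurry_left
  have hk_right (y : Y) : Measurable (fun x => k x y) := hk.of_uncurry_right
  have hk_prod : Measurable (fun z : X × Y => k z.1 z.2) := hk
  calc ∫⁻ x, (∫⁻ y, k x y * f y ∂ν) ^ 2 ∂μ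
      ≤ ∫⁻ x, A * p x * ∫⁻ y, k x y * (f y ^ 2 / q y) ∂ν ∂μ := by
        refine lintegral_mono_ae ?_
        filter_upwards [hrow] with x hx
        exact (sq_lintegral_mul_le_of_weight (hk_left x) hf hq hq_pos).trans (by gcongr)
    _ = ∫⁻ x, ∫⁻ y, A * p x * (k x y * (f y ^ 2 / q y)) ∂ν ∂μ :=
        lintegral_congr fun x => (lintegral_const_mul _ (by fun_prop)).symm
    _ = ∫⁻ y, ∫⁻ x, A * p x * (k x y * (f y ^ 2 / q y)) ∂μ ∂ν :=
        lintegral_lintegral_swap (Measurable.aemeasurable (by fun_prop))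
    _ = ∫⁻ y, A * (f y ^ 2 / q y) * ∫⁻ x, k x y * p x ∂μ ∂ν := by
        refine lintegral_congr fun y => ?_
        rw [← lintegral_const_mul _ (by fun_prop)]
        exact lintegral_congr fun x => by ring
    _ ≤ ∫⁻ y, A * B * f y ^ 2 ∂ν := by
        refine lintegral_mono_ae ?_
        filter_upwards [hcol, hq_pos] with y hy hqy
        calc A * (f y ^ 2 / q y) * ∫⁻ x, k x y * p x ∂μ ≤ A * (f y ^ 2 / q y) * (B * q y) := by
              gcongr
          _ = A * B * (q y * (f y ^ 2 / q y)) := by ring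
          _ = A * B * f y ^ 2 := by rw [ENNReal.mul_div_cancel hqy.1 hqy.2]
    _ = A * B * ∫⁻ y, f y ^ 2 ∂ν := lintegral_const_mul _ (by fun_prop)

variable {K : X → Y → 𝕜} {A : ℝ≥0}

theorem eLpNorm_two_sq (g : X → 𝕜) : eLpNorm g 2 μ ^ 2 = ∫⁻ x, ‖g x‖ₑ ^ 2 ∂μ := by
  simpa using eLpNorm_nnreal_pow_eq_lintegral (f := g) (μ := μ) (two_ne_zero (α := ℝ≥0))

namespace AbsolutelyBoundedKernel

theorem of_schur [SFinite μ] [SFinite ν] (hK_meas : StronglyMeasurable (Function.uncurry K))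
    {p : X → ℝ≥0∞} (hp : Measurable p) {q : Y → ℝ≥0∞} (hq : Measurable q)
    (hq_pos : ∀ᵐ y ∂ν, q y ≠ 0 ∧ q y ≠ ∞)
    (hrow : ∀ᵐ x ∂μ, ∫⁻ y, ‖K x y‖ₑ * q y ∂ν ≤ A * p x)
    (hcol : ∀ᵐ y ∂ν, ∫⁻ x, ‖K x y‖ₑ * p x ∂μ ≤ A * q y) : AbsolutelyBoundedKernel μ ν K A := by
  intro f hf
  rw [sq (A : ℝ≥0∞)]
  exact lintegral_sq_lintegral_mul_le_of_schur hK_meas.enorm hp hq hq_pos hrow hcol hf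

theorem lintegral_enorm_sq_le (hK : AbsolutelyBoundedKernel μ ν K A) (f : Lp 𝕜 2 ν) :
    ∫⁻ x, (∫⁻ y, ‖K x y * f y‖ₑ ∂ν) ^ 2 ∂μ ≤ (A * eLpNorm f 2 ν) ^ 2 := by
  simp only [enorm_mul, mul_pow, eLpNorm_two_sq]
  exact hK _ (Lp.stronglyMeasurable f).enorm

theorem eLpNorm_integral_le (hK : AbsolutelyBoundedKernel μ ν K A) (f : Lp 𝕜 2 ν) :
    eLpNorm (fun x => ∫ y, K x y * f y ∂ν) 2 μ ≤ A * eLpNorm f 2 ν := by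
  rw [← ENNReal.pow_le_pow_left_iff two_ne_zero, eLpNorm_two_sq]
  refine le_trans ?_ (hK.lintegral_enorm_sq_le f)
  gcongr with x
  exact enorm_integral_le_lintegral_enorm _

variable [SFinite ν]

theorem ae_integrable (hK : AbsolutelyBoundedKernel μ ν K A)
    (hK_meas : StronglyMeasurable (Function.uncurry K)) (f : Lp 𝕜 2 ν) :
    ∀ᵐ x ∂μ, Integrable (fun y => K x y * f y) ν := by
  have hmeas : StronglyMeasurable (fun z : X × Y => K z.1 z.2 * f z.2) :=
    hK_meas.mul ((Lp.stronglyMeasurable f).comp_measurable measurable_snd)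
  have hfinite : ∫⁻ x, (∫⁻ y, ‖K x y * f y‖ₑ ∂ν) ^ 2 ∂μ ≠ ∞ :=
    ((hK.lintegral_enorm_sq_le f).trans_lt
      (ENNReal.pow_lt_top (ENNReal.mul_lt_top ENNReal.coe_lt_top (Lp.eLpNorm_lt_top f)))).ne
  filter_upwards [ae_lt_top (hmeas.enorm.lintegral_prod_right'.pow_const 2) hfinite] with x hx
  exact ⟨(hmeas.comp_measurable measurable_prodMk_left).aestronglyMeasurable,
    (ENNReal.pow_lt_top_iff.1 hx).resolve_right two_ne_zero⟩

theorem memLp_integral (hK : AbsolutelyBoundedKernel μ ν K A)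
    (hK_meas : StronglyMeasurable (Function.uncurry K)) (f : Lp 𝕜 2 ν) :
    MemLp (fun x => ∫ y, K x y * f y ∂ν) 2 μ :=
  ⟨(hK_meas.mul ((Lp.stronglyMeasurable f).comp_measurable
      measurable_snd)).integral_prod_right'.aestronglyMeasurable,
    (hK.eLpNorm_integral_le f).trans_lt
      (ENNReal.mul_lt_top ENNReal.coe_lt_top (Lp.eLpNorm_lt_top f))⟩

/-- The integral operator `L²(ν) → L²(μ)` with an absolutely bounded kernel, as a linear map. -/
noncomputable def toLinearMap (hK : AbsolutelyBoundedKernel μ ν K A)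
    (hK_meas : StronglyMeasurable (Function.uncurry K)) : Lp 𝕜 2 ν →ₗ[𝕜] Lp 𝕜 2 μ where
  toFun f := (hK.memLp_integral hK_meas f).toLp _
  map_add' f g := by
    rw [← MemLp.toLp_add, MemLp.toLp_eq_toLp_iff]
    filter_upwards [hK.ae_integrable hK_meas f, hK.ae_integrable hK_meas g] with x hf hg
    rw [Pi.add_apply, ← integral_add hf hg]
    refine integral_congr_ae ?_
    filter_upwards [Lp.coeFn_add f g] with y hy
    rw [hy, Pi.add_apply, mul_add]
  map_smul' c f := by
    rw [RingHom.id_apply, ← MemLp.toLp_const_smul, MemLp.toLp_eq_toLp_iff]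
    refine Eventually.of_forall fun x => ?_
    simp only [Pi.smul_apply]
    rw [← integral_smul]
    refine integral_congr_ae ?_
    filter_upwards [Lp.coeFn_smul c f] with y hy
    rw [hy, Pi.smul_apply, mul_smul_comm]

theorem norm_toLinearMap_le (hK : AbsolutelyBoundedKernel μ ν K A)
    (hK_meas : StronglyMeasurable (Function.uncurry K)) (f : Lp 𝕜 2 ν) :
    ‖hK.toLinearMap hK_meas f‖ ≤ A * ‖f‖ := by
  change ‖(hK.memLp_integral hK_meas f).toLp _‖ ≤ _
  rw [Lp.norm_toLp, Lp.norm_def, ← ENNReal.coe_toReal, ← ENNReal.toReal_mul]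
  exact ENNReal.toReal_mono (ENNReal.mul_lt_top ENNReal.coe_lt_top (Lp.eLpNorm_lt_top f)).ne
    (hK.eLpNorm_integral_le f)

theorem exists_isIntegralOperator (hK : AbsolutelyBoundedKernel μ ν K A)
    (hK_meas : StronglyMeasurable (Function.uncurry K)) :
    ∃ T : Lp 𝕜 2 ν →L[𝕜] Lp 𝕜 2 μ, IsIntegralOperator K T ∧ ‖T‖ ≤ A := by
  refine ⟨(hK.toLinearMap hK_meas).mkContinuous A (hK.norm_toLinearMap_le hK_meas), fun f => ?_,
    LinearMap.mkContinuous_norm_le _ A.2 _⟩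
  filter_upwards [hK.ae_integrable hK_meas f, (hK.memLp_integral hK_meas f).coeFn_toLp]
    with x hint hcoe
  exact ⟨hint, hcoe⟩

end AbsolutelyBoundedKernel

end IntegralOperators

/-! ### Cosine coefficients over a period -/

section CosineCoefficients

theorem integral_exp_mul_eq_integral_cos_mul {k : ℝ → ℝ} (hk : Continuous k)
    (hsymm : ∀ θ, k (2 * π - θ) = k θ) (n : ℤ) :
    ∫ θ in (0 : ℝ)..(2 * π), Complex.exp (-Complex.I * n * θ) * k θ
      = ((∫ θ in (0 : ℝ)..(2 * π), cos (n * θ) * k θ : ℝ) : ℂ) := by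
  have hreflect : ∫ θ in (0 : ℝ)..(2 * π), Complex.exp (-Complex.I * n * θ) * k θ
      = ∫ θ in (0 : ℝ)..(2 * π), Complex.exp (Complex.I * n * θ) * k θ := by
    have hsubst := intervalIntegral.integral_comp_sub_left (a := 0) (b := 2 * π)
      (fun θ : ℝ => Complex.exp (-Complex.I * n * θ) * k θ) (2 * π)
    rw [sub_self, sub_zero] at hsubst
    rw [← hsubst]
    refine intervalIntegral.integral_congr fun θ _ => ?_
    have hperiod : -Complex.I * n * ((2 * π - θ : ℝ) : ℂ)
        = Complex.I * n * θ + ((-n : ℤ) : ℂ) * (2 * π * Complex.I) := by push_cast; ring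
    simp only [hsymm, hperiod, Complex.exp_add, Complex.exp_int_mul_two_pi_mul_I, mul_one]
  have hcos (θ : ℝ) : ((cos (n * θ) * k θ : ℝ) : ℂ)
      = (Complex.exp (-Complex.I * n * θ) * k θ + Complex.exp (Complex.I * n * θ) * k θ) / 2 := by
    push_cast
    rw [Complex.cos, show (n * θ : ℂ) * Complex.I = Complex.I * n * θ by ring,
      show -(n * θ : ℂ) * Complex.I = -Complex.I * n * θ by ring]
    ring
  rw [← intervalIntegral.integral_ofReal]
  simp only [hcos]
  rw [intervalIntegral.integral_div, intervalIntegral.integral_add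
    (Continuous.intervalIntegrable (by fun_prop) _ _)
    (Continuous.intervalIntegrable (by fun_prop) _ _), ← hreflect, add_self_div_two]

theorem sq_mul_integral_cos_mul_eq {f f' f'' : ℝ → ℝ} (hf : ∀ θ, HasDerivAt f (f' θ) θ)
    (hf' : ∀ θ, HasDerivAt f' (f'' θ) θ) (hf'' : Continuous f'') (hperiod : f' 0 = f' (2 * π))
    (n : ℤ) :
    (n : ℝ) ^ 2 * ∫ θ in (0 : ℝ)..(2 * π), cos (n * θ) * f θ
      = ∫ θ in (0 : ℝ)..(2 * π), (1 - cos (n * θ)) * f'' θ := by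
  have hf_cont : Continuous f := continuous_iff_continuousAt.2 fun θ => (hf θ).continuousAt
  let F : ℝ → ℝ := fun θ => cos (n * θ) * f' θ + n * (sin (n * θ) * f θ) - f' θ
  have hF (θ : ℝ) : HasDerivAt F
      ((n : ℝ) ^ 2 * (cos (n * θ) * f θ) - (1 - cos (n * θ)) * f'' θ) θ := by
    have hlin : HasDerivAt (fun θ : ℝ => (n : ℝ) * θ) n θ := by
      simpa using (hasDerivAt_id θ).const_mul (n : ℝ)
    refine (((hlin.cos.fun_mul (hf' θ)).fun_add
      ((hlin.sin.fun_mul (hf θ)).const_mul (n : ℝ))).fun_sub (hf' θ)).congr_deriv ?_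
    ring
  have hF_period : F (2 * π) = F 0 := by
    simp [F, hperiod, cos_int_mul_two_pi, show sin (n * (2 * π)) = 0 by
      simpa using sin_int_mul_two_pi_sub 0 n]
  have hint := intervalIntegral.integral_eq_sub_of_hasDerivAt (a := 0) (b := 2 * π)
    (fun θ _ => hF θ) (Continuous.intervalIntegrable (by fun_prop) _ _)
  rw [hF_period, sub_self, intervalIntegral.integral_sub
    (Continuous.intervalIntegrable (by fun_prop) _ _)
    (Continuous.intervalIntegrable (by fun_prop) _ _), intervalIntegral.integral_const_mul] at hint
  exact sub_eq_zero.1 hint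

theorem sq_mul_abs_integral_cos_mul_le {f f' f'' g : ℝ → ℝ} (hf : ∀ θ, HasDerivAt f (f' θ) θ)
    (hf' : ∀ θ, HasDerivAt f' (f'' θ) θ) (hf'' : Continuous f'') (hperiod : f' 0 = f' (2 * π))
    (hg : Continuous g) (hle : ∀ θ, |f'' θ| ≤ g θ) (n : ℤ) :
    (n : ℝ) ^ 2 * |∫ θ in (0 : ℝ)..(2 * π), cos (n * θ) * f θ|
      ≤ ∫ θ in (0 : ℝ)..(2 * π), (1 - cos (n * θ)) * g θ := by
  rw [← abs_of_nonneg (sq_nonneg (n : ℝ)), ← abs_mul,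
    sq_mul_integral_cos_mul_eq hf hf' hf'' hperiod]
  refine (intervalIntegral.abs_integral_le_integral_abs two_pi_pos.le).trans ?_
  refine intervalIntegral.integral_mono two_pi_pos.le
    (Continuous.intervalIntegrable (by fun_prop) _ _)
    (Continuous.intervalIntegrable (by fun_prop) _ _) fun θ => ?_
  have hcos : 0 ≤ 1 - cos (n * θ) := sub_nonneg.2 (cos_le_one _)
  simp only [abs_mul, abs_of_nonneg hcos]
  gcongr
  exact hle θ

theorem cos_lt_one_of_mem_Ioo {θ : ℝ} (hθ : θ ∈ Set.Ioo 0 (2 * π)) : cos θ < 1 := by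
  refine lt_of_le_of_ne (cos_le_one θ) fun h => hθ.1.ne' ?_
  exact (cos_eq_one_iff_of_lt_of_lt (by linarith [hθ.1, pi_pos]) hθ.2).1 h

theorem one_sub_cos_add_two_mul_div {θ : ℝ} (hθ : cos θ < 1) (n : ℕ) :
    (1 - cos ((n + 2 : ℕ) * θ)) / (1 - cos θ)
      = 2 * ((1 - cos ((n + 1 : ℕ) * θ)) / (1 - cos θ)) - (1 - cos (n * θ)) / (1 - cos θ)
        + 2 * cos ((n + 1 : ℕ) * θ) := by
  have hne : 1 - cos θ ≠ 0 := by linarith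
  have hsum : cos ((n + 2 : ℕ) * θ) + cos (n * θ) = 2 * cos ((n + 1 : ℕ) * θ) * cos θ := by
    rw [cos_add_cos]
    push_cast
    ring_nf
  generalize cos ((n + 2 : ℕ) * θ) = c₂, cos ((n + 1 : ℕ) * θ) = c₁, cos (n * θ) = c₀ at hsum ⊢
  field_simp
  linear_combination -hsum

theorem integral_cos_natCast_succ_mul (n : ℕ) :
    ∫ θ in (0 : ℝ)..(2 * π), cos ((n + 1 : ℕ) * θ) = 0 := by
  rw [intervalIntegral.integral_comp_mul_left _ (by positivity), integral_cos, mul_zero, sin_zero,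
    show sin ((n + 1 : ℕ) * (2 * π)) = 0 by simpa using sin_nat_mul_two_pi_sub 0 (n + 1)]
  simp

/-- The integral of the Fejér kernel. The second differences in `n` of the integrand are the
functions `2 cos ((n + 1) θ)`, whose integrals vanish. -/
theorem integral_one_sub_cos_div_one_sub_cos (n : ℕ) :
    IntervalIntegrable (fun θ => (1 - cos (n * θ)) / (1 - cos θ)) volume 0 (2 * π) ∧
      ∫ θ in (0 : ℝ)..(2 * π), (1 - cos (n * θ)) / (1 - cos θ) = 2 * π * n := by
  induction n using Nat.twoStepInduction with
  | zero => simp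
  | one =>
    have hone : Set.EqOn (fun _ => (1 : ℝ)) (fun θ => (1 - cos ((1 : ℕ) * θ)) / (1 - cos θ))
        (Set.uIoo 0 (2 * π)) := by
      intro θ hθ
      rw [Set.uIoo_of_le two_pi_pos.le] at hθ
      have hne : 1 - cos θ ≠ 0 := by linarith [cos_lt_one_of_mem_Ioo hθ]
      simp [hne]
    refine ⟨intervalIntegrable_const.congr_uIoo hone, ?_⟩
    rw [← intervalIntegral.integral_congr_uIoo hone]
    simp
  | more n ih ih' =>
    have hrec : Set.EqOn (fun θ => 2 * ((1 - cos ((n + 1 : ℕ) * θ)) / (1 - cos θ))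
          - (1 - cos (n * θ)) / (1 - cos θ) + 2 * cos ((n + 1 : ℕ) * θ))
        (fun θ => (1 - cos ((n + 2 : ℕ) * θ)) / (1 - cos θ)) (Set.uIoo 0 (2 * π)) := by
      intro θ hθ
      rw [Set.uIoo_of_le two_pi_pos.le] at hθ
      exact (one_sub_cos_add_two_mul_div (cos_lt_one_of_mem_Ioo hθ) n).symm
    have hdiff := (ih'.1.const_mul 2).sub ih.1
    have hcos : IntervalIntegrable (fun θ => 2 * cos ((n + 1 : ℕ) * θ)) volume 0 (2 * π) :=
      Continuous.intervalIntegrable (by fun_prop) _ _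
    refine ⟨(hdiff.add hcos).congr_uIoo hrec, ?_⟩
    rw [← intervalIntegral.integral_congr_uIoo hrec, intervalIntegral.integral_add hdiff hcos,
      intervalIntegral.integral_sub (ih'.1.const_mul 2) ih.1]
    simp only [intervalIntegral.integral_const_mul, ih.2, ih'.2, integral_cos_natCast_succ_mul]
    push_cast
    ring

end CosineCoefficients

/-! ### Distances between two rays -/

/-- The distance between the points at radii `t` and `s` on two rays from the origin, with
`κ = 1 - cos φ` for the angle `φ` between the rays (law of cosines). Two generatrices of the cone
whose azimuths differ by `θ` have `κ = sin α ^ 2 * (1 - cos θ)`. -/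
noncomputable def chord (κ t s : ℝ) : ℝ :=
  √((t - s) ^ 2 + 2 * κ * (t * s))

section Chord

variable {κ t s : ℝ}

theorem chord_comm (κ t s : ℝ) : chord κ t s = chord κ s t := by
  unfold chord
  ring_nf

theorem chord_sq (h : 0 < chord κ t s) : chord κ t s ^ 2 = (t - s) ^ 2 + 2 * κ * (t * s) :=
  sq_sqrt (sqrt_pos.1 h).le

theorem chord_pos_of_pos (hκ : 0 < κ) (ht : 0 < t) (hs : 0 ≤ s) : 0 < chord κ t s := by
  refine sqrt_pos.2 ?_
  rcases hs.eq_or_lt with rfl | hs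
  · simpa using pow_pos ht 2
  · positivity

theorem chord_pos_of_ne (hκ : 0 ≤ κ) (ht : 0 ≤ t) (hs : 0 ≤ s) (hts : t ≠ s) :
    0 < chord κ t s := by
  have : 0 < (t - s) ^ 2 := sq_pos_of_ne_zero (sub_ne_zero.2 hts)
  exact sqrt_pos.2 (by positivity)

theorem hasDerivAt_sub_div_chord (h : 0 < chord κ t s) :
    HasDerivAt (fun s => (s - t) / chord κ t s) (κ * t * ((t + s) / chord κ t s ^ 3)) s := by
  have hradicand : HasDerivAt (fun s => (t - s) ^ 2 + 2 * κ * (t * s))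
      (2 * (t - s) * (-1) + 2 * κ * t) s := by
    simpa using (((hasDerivAt_id s).const_sub t).fun_pow 2).fun_add
      (((hasDerivAt_id s).const_mul t).const_mul (2 * κ))
  have hchord : HasDerivAt (chord κ t) ((s - t + κ * t) / chord κ t s) s := by
    refine (hradicand.sqrt (sqrt_pos.1 h).ne').congr_deriv ?_
    change _ / (2 * chord κ t s) = _
    field_simp
    ring
  refine (((hasDerivAt_id s).sub_const t).fun_div hchord h.ne').congr_deriv ?_
  have hsq := chord_sq h
  simp only [id]
  field_simp
  linear_combination hsq

theorem tendsto_sub_div_chord (κ t : ℝ) :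
    Tendsto (fun s => (s - t) / chord κ t s) atTop (𝓝 1) := by
  have hscaled : ContinuousAt (fun u : ℝ => (1 - u) / √((1 - u) ^ 2 + 2 * κ * u)) 0 := by
    apply ContinuousAt.div <;> first | fun_prop | simp
  have hlim := hscaled.tendsto.comp ((tendsto_const_nhds (x := t)).div_atTop tendsto_id)
  simp only [sub_zero, mul_zero, add_zero, one_pow, sqrt_one, div_one] at hlim
  refine hlim.congr' ?_
  filter_upwards [eventually_gt_atTop 0] with s hs
  have hscale : chord κ t s = s * √((1 - t / s) ^ 2 + 2 * κ * (t / s)) := by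
    rw [chord, show (t - s) ^ 2 + 2 * κ * (t * s)
      = s ^ 2 * ((1 - t / s) ^ 2 + 2 * κ * (t / s)) by field_simp; ring,
      sqrt_mul (sq_nonneg s), sqrt_sq hs.le]
  have hnum : s - t = s * (1 - t / s) := by field_simp
  rw [hscale, hnum, mul_div_mul_left _ _ hs.ne']
  rfl

theorem lintegral_add_div_chord_cube (hκ : 0 < κ) (ht : 0 < t) :
    ∫⁻ s in Set.Ioi 0, ENNReal.ofReal ((t + s) / chord κ t s ^ 3)
      = ENNReal.ofReal (2 / (κ * t)) := by
  have hchord {s : ℝ} (hs : 0 ≤ s) : 0 < chord κ t s := chord_pos_of_pos hκ ht hs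
  have hderiv : ∀ s ∈ Set.Ici (0 : ℝ), HasDerivAt (fun s => (s - t) / chord κ t s / (κ * t))
      ((t + s) / chord κ t s ^ 3) s := fun s hs =>
    ((hasDerivAt_sub_div_chord (hchord hs)).div_const _).congr_deriv (by field_simp)
  have hnonneg : ∀ s ∈ Set.Ioi (0 : ℝ), 0 ≤ (t + s) / chord κ t s ^ 3 := fun s hs => by
    have := hchord (le_of_lt hs)
    have : 0 < s := hs
    positivity
  have hlim := (tendsto_sub_div_chord κ t).div_const (κ * t)
  have hzero : (0 - t) / chord κ t 0 / (κ * t) = -1 / (κ * t) := by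
    simp [chord, sqrt_sq ht.le, neg_div, ht.ne']
  rw [← ofReal_integral_eq_lintegral_ofReal (integrableOn_Ioi_deriv_of_nonneg' hderiv hnonneg hlim)
    (ae_restrict_of_forall_mem measurableSet_Ioi hnonneg),
    integral_Ioi_of_hasDerivAt_of_nonneg' hderiv hnonneg hlim, hzero]
  ring_nf

end Chord

/-! ### The angular profile of the kernel -/

section AngularProfile

variable {σ t s : ℝ}

/-- The angular part of the layer-potential kernel of a cone, with `σ = sin α ^ 2`. -/
noncomputable def angularProfile (σ t s θ : ℝ) : ℝ :=
  (1 - cos θ) / chord (σ * (1 - cos θ)) t s ^ 3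

/-- The part of the squared distance that is due to the azimuth, as a fraction of twice the squared
distance; the derivatives of `angularProfile` are polynomials in it, divided by the cubed
distance. -/
noncomputable def azimuthRatio (σ t s θ : ℝ) : ℝ :=
  σ * (t * s) * (1 - cos θ) / chord (σ * (1 - cos θ)) t s ^ 2

/-- The first derivative of `angularProfile` in `θ`. -/
noncomputable def angularProfileDeriv (σ t s θ : ℝ) : ℝ :=
  sin θ * (1 - 3 * azimuthRatio σ t s θ) / chord (σ * (1 - cos θ)) t s ^ 3

/-- The second derivative of `angularProfile` in `θ`. -/
noncomputable def angularProfileDeriv₂ (σ t s θ : ℝ) : ℝ :=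
  (cos θ * (1 - 3 * azimuthRatio σ t s θ)
    + (1 + cos θ) * (15 * azimuthRatio σ t s θ ^ 2 - 6 * azimuthRatio σ t s θ))
    / chord (σ * (1 - cos θ)) t s ^ 3

theorem chord_one_sub_cos_pos (hσ : 0 ≤ σ) (ht : 0 ≤ t) (hs : 0 ≤ s) (hts : t ≠ s) (θ : ℝ) :
    0 < chord (σ * (1 - cos θ)) t s :=
  chord_pos_of_ne (mul_nonneg hσ (sub_nonneg.2 (cos_le_one θ))) ht hs hts

theorem continuous_chord_one_sub_cos (σ t s : ℝ) :
    Continuous fun θ => chord (σ * (1 - cos θ)) t s := by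
  unfold chord
  fun_prop

theorem hasDerivAt_chord_one_sub_cos {θ : ℝ} (h : 0 < chord (σ * (1 - cos θ)) t s) :
    HasDerivAt (fun θ => chord (σ * (1 - cos θ)) t s)
      (σ * (t * s) * sin θ / chord (σ * (1 - cos θ)) t s) θ := by
  have hradicand : HasDerivAt (fun θ => (t - s) ^ 2 + 2 * (σ * (1 - cos θ)) * (t * s))
      (2 * (σ * sin θ) * (t * s)) θ := by
    simpa using (((((hasDerivAt_cos θ).const_sub 1).const_mul σ).const_mul 2).mul_const
      (t * s)).const_add ((t - s) ^ 2)
  refine (hradicand.sqrt (sqrt_pos.1 h).ne').congr_deriv ?_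
  change _ / (2 * chord (σ * (1 - cos θ)) t s) = _
  field_simp

theorem hasDerivAt_angularProfile {θ : ℝ} (h : 0 < chord (σ * (1 - cos θ)) t s) :
    HasDerivAt (angularProfile σ t s) (angularProfileDeriv σ t s θ) θ := by
  refine (((hasDerivAt_cos θ).const_sub 1).fun_div
    ((hasDerivAt_chord_one_sub_cos h).fun_pow 3) (by positivity)).congr_deriv ?_
  unfold angularProfileDeriv azimuthRatio
  field_simp
  ring

theorem hasDerivAt_azimuthRatio {θ : ℝ} (h : 0 < chord (σ * (1 - cos θ)) t s) :
    HasDerivAt (azimuthRatio σ t s) (σ * (t * s) * sin θ * (1 - 2 * azimuthRatio σ t s θ)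
      / chord (σ * (1 - cos θ)) t s ^ 2) θ := by
  refine ((((hasDerivAt_cos θ).const_sub 1).const_mul (σ * (t * s))).fun_div
    ((hasDerivAt_chord_one_sub_cos h).fun_pow 2) (by positivity)).congr_deriv ?_
  unfold azimuthRatio
  field_simp
  ring

theorem hasDerivAt_angularProfileDeriv {θ : ℝ} (h : 0 < chord (σ * (1 - cos θ)) t s) :
    HasDerivAt (angularProfileDeriv σ t s) (angularProfileDeriv₂ σ t s θ) θ := by
  have hsin : sin θ ^ 2 = (1 - cos θ) * (1 + cos θ) := by linear_combination sin_sq_add_cos_sq θ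
  refine (((hasDerivAt_sin θ).fun_mul
    (((hasDerivAt_azimuthRatio h).const_mul 3).const_sub 1)).fun_div
    ((hasDerivAt_chord_one_sub_cos h).fun_pow 3) (by positivity)).congr_deriv ?_
  unfold angularProfileDeriv₂ azimuthRatio
  field_simp
  rw [hsin]
  ring

theorem continuous_angularProfileDeriv₂ (h : ∀ θ, chord (σ * (1 - cos θ)) t s ≠ 0) :
    Continuous (angularProfileDeriv₂ σ t s) := by
  have hchord := continuous_chord_one_sub_cos σ t s
  have hratio : Continuous (azimuthRatio σ t s) :=
    .div (by fun_prop) (hchord.pow 2) fun θ => pow_ne_zero 2 (h θ)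
  exact .div (by fun_prop) (hchord.pow 3) fun θ => pow_ne_zero 3 (h θ)

theorem azimuthRatio_mem_Icc (hσ : 0 ≤ σ) (ht : 0 ≤ t) (hs : 0 ≤ s) {θ : ℝ}
    (h : 0 < chord (σ * (1 - cos θ)) t s) : azimuthRatio σ t s θ ∈ Set.Icc 0 (1 / 2) := by
  have hcos : 0 ≤ 1 - cos θ := sub_nonneg.2 (cos_le_one θ)
  refine ⟨by unfold azimuthRatio; positivity, ?_⟩
  rw [azimuthRatio, div_le_iff₀ (by positivity), chord_sq h]
  linarith [sq_nonneg (t - s)]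

theorem abs_angularProfileDeriv₂_le (hσ : 0 ≤ σ) (ht : 0 ≤ t) (hs : 0 ≤ s) {θ : ℝ}
    (h : 0 < chord (σ * (1 - cos θ)) t s) :
    |angularProfileDeriv₂ σ t s θ| ≤ 3 / chord (σ * (1 - cos θ)) t s ^ 3 := by
  obtain ⟨hy₀, hy₁⟩ := azimuthRatio_mem_Icc hσ ht hs h
  have hcos := neg_one_le_cos θ
  have hcos' := cos_le_one θ
  rw [angularProfileDeriv₂, abs_div, abs_of_pos (pow_pos h 3)]
  gcongr
  generalize azimuthRatio σ t s θ = y at hy₀ hy₁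
  have hlin : |cos θ * (1 - 3 * y)| ≤ 1 := by
    rw [abs_mul]
    exact mul_le_one₀ (abs_cos_le_one θ) (abs_nonneg _) (abs_le.2 ⟨by linarith, by linarith⟩)
  have hquad : |(1 + cos θ) * (15 * y ^ 2 - 6 * y)| ≤ 2 * 1 := by
    rw [abs_mul, abs_of_nonneg (by linarith)]
    have : |15 * y ^ 2 - 6 * y| ≤ 1 := abs_le.2 ⟨by nlinarith [sq_nonneg (5 * y - 1)], by nlinarith⟩
    gcongr
    linarith
  linarith [abs_add_le (cos θ * (1 - 3 * y)) ((1 + cos θ) * (15 * y ^ 2 - 6 * y))]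

/-- The weight that dominates the `n`-th cosine coefficient of `angularProfile` after division by
the cubed distance. For `n ≠ 0` it comes from integrating by parts twice. -/
noncomputable def modeWeight (n : ℤ) (θ : ℝ) : ℝ :=
  if n = 0 then 1 - cos θ else 3 / (n : ℝ) ^ 2 * (1 - cos (n * θ))

theorem modeWeight_nonneg (n : ℤ) (θ : ℝ) : 0 ≤ modeWeight n θ := by
  have h (x : ℝ) : 0 ≤ 1 - cos x := sub_nonneg.2 (cos_le_one x)
  unfold modeWeight
  split_ifs
  · exact h θ
  · exact mul_nonneg (by positivity) (h _)

theorem continuous_modeWeight (n : ℤ) : Continuous (modeWeight n) := by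
  unfold modeWeight
  split_ifs <;> fun_prop

theorem integral_modeWeight_div_one_sub_cos_le (n : ℤ) :
    IntervalIntegrable (fun θ => modeWeight n θ / (1 - cos θ)) volume 0 (2 * π) ∧
      ∫ θ in (0 : ℝ)..(2 * π), modeWeight n θ / (1 - cos θ) ≤ 2 * π * (6 / (n.natAbs + 1)) := by
  rcases eq_or_ne n 0 with rfl | hn
  · have hfejer := integral_one_sub_cos_div_one_sub_cos 1
    simp only [Nat.cast_one, one_mul, mul_one] at hfejer
    refine ⟨by simpa [modeWeight] using hfejer.1, ?_⟩
    simp only [modeWeight, if_true, hfejer.2]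
    norm_num
    linarith [pi_pos]
  · have hcos (θ : ℝ) : cos (n * θ) = cos (n.natAbs * θ) := by
      rw [← cos_abs (n * θ), abs_mul, ← Int.cast_abs, ← Nat.cast_natAbs, ← cos_abs (_ * θ), abs_mul,
        Nat.abs_cast]
    have hfejer := integral_one_sub_cos_div_one_sub_cos n.natAbs
    simp only [modeWeight, if_neg hn, hcos, mul_div_assoc]
    refine ⟨hfejer.1.const_mul _, ?_⟩
    have hsq : (n : ℝ) ^ 2 = (n.natAbs : ℝ) ^ 2 := by rw [Nat.cast_natAbs, Int.cast_abs, sq_abs]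
    have hone : (1 : ℝ) ≤ n.natAbs := by exact_mod_cast Int.natAbs_pos.2 hn
    calc ∫ θ in (0 : ℝ)..(2 * π), 3 / (n : ℝ) ^ 2 * ((1 - cos (n.natAbs * θ)) / (1 - cos θ))
        = 2 * π * (3 / n.natAbs) := by
          rw [intervalIntegral.integral_const_mul, hfejer.2, hsq]
          field_simp
      _ ≤ 2 * π * (6 / (n.natAbs + 1)) := by
          refine mul_le_mul_of_nonneg_left ?_ two_pi_pos.le
          rw [div_le_div_iff₀ (by positivity) (by positivity)]
          linarith

theorem abs_integral_cos_mul_angularProfile_le (hσ : 0 ≤ σ) (ht : 0 ≤ t) (hs : 0 ≤ s)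
    (hts : t ≠ s) (n : ℤ) :
    |∫ θ in (0 : ℝ)..(2 * π), cos (n * θ) * angularProfile σ t s θ|
      ≤ ∫ θ in (0 : ℝ)..(2 * π), modeWeight n θ / chord (σ * (1 - cos θ)) t s ^ 3 := by
  have hpos (θ : ℝ) := chord_one_sub_cos_pos hσ ht hs hts θ
  rcases eq_or_ne n 0 with rfl | hn
  · refine (intervalIntegral.abs_integral_le_integral_abs two_pi_pos.le).trans_eq ?_
    refine intervalIntegral.integral_congr fun θ _ => ?_
    have hnonneg : 0 ≤ angularProfile σ t s θ :=
      div_nonneg (sub_nonneg.2 (cos_le_one θ)) (pow_pos (hpos θ) 3).le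
    simpa [modeWeight, angularProfile] using hnonneg
  have hbound : Continuous fun θ => 3 / chord (σ * (1 - cos θ)) t s ^ 3 :=
    continuous_const.div ((continuous_chord_one_sub_cos σ t s).pow 3)
      fun θ => (pow_pos (hpos θ) 3).ne'
  have hparts := sq_mul_abs_integral_cos_mul_le (fun θ => hasDerivAt_angularProfile (hpos θ))
    (fun θ => hasDerivAt_angularProfileDeriv (hpos θ))
    (continuous_angularProfileDeriv₂ fun θ => (hpos θ).ne') (by simp [angularProfileDeriv])
    hbound (fun θ => abs_angularProfileDeriv₂_le hσ ht hs (hpos θ)) n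
  have hn_sq : 0 < (n : ℝ) ^ 2 := by positivity
  refine ((le_div_iff₀' hn_sq).2 hparts).trans_eq ?_
  rw [← intervalIntegral.integral_div]
  refine intervalIntegral.integral_congr fun θ _ => ?_
  simp only [modeWeight, if_neg hn]
  ring

end AngularProfile

/-! ### The modal kernels of the cone -/

section ModalKernel

variable {t s : ℝ}

theorem inner_coneParam_sub_coneNormal (α t θ s : ℝ) :
    inner ℝ (coneParam α t θ - coneParam α s 0) (coneNormal α θ)
      = sin α * cos α * s * (1 - cos θ) := by
  simp only [coneParam, coneNormal, PiLp.inner_apply, Fin.sum_univ_three, cos_zero, sin_zero,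
    mul_one, mul_zero, sub_zero, neg_mul, PiLp.sub_apply, RCLike.inner_apply, ringHom_apply,
    Matrix.cons_val_zero, Matrix.cons_val_one, Matrix.cons_val]
  linear_combination cos α * sin α * t * sin_sq_add_cos_sq θ

theorem norm_coneParam_sub (α t θ s : ℝ) :
    ‖coneParam α s 0 - coneParam α t θ‖ = chord (sin α ^ 2 * (1 - cos θ)) t s := by
  rw [EuclideanSpace.norm_eq, chord]
  congr 1
  simp only [coneParam, Fin.sum_univ_three, cos_zero, sin_zero, mul_one, mul_zero, zero_sub,
    PiLp.sub_apply, norm_eq_abs, sq_abs, Matrix.cons_val_zero, Matrix.cons_val_one,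
    Matrix.cons_val]
  linear_combination sin α ^ 2 * t ^ 2 * sin_sq_add_cos_sq θ
    + (t - s) ^ 2 * sin_sq_add_cos_sq α

theorem coneKernel_eq_mul_angularProfile (α t θ s : ℝ) :
    coneKernel α t θ s 0 = sin α * cos α * s * angularProfile (sin α ^ 2) t s θ := by
  rw [coneKernel, inner_coneParam_sub_coneNormal, norm_coneParam_sub, mul_div_assoc, angularProfile]

theorem modalKernel_eq_integral_cos (α : ℝ) (n : ℤ) (ht : 0 ≤ t) (hs : 0 ≤ s) (hts : t ≠ s) :
    modalKernel α n t s = ((1 / (2 * π) * (sin α * cos α * s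
      * ∫ θ in (0 : ℝ)..(2 * π), cos (n * θ) * angularProfile (sin α ^ 2) t s θ) : ℝ) : ℂ) := by
  have hcont : Continuous (angularProfile (sin α ^ 2) t s) :=
    continuous_iff_continuousAt.2 fun θ => (hasDerivAt_angularProfile
      (chord_one_sub_cos_pos (sq_nonneg _) ht hs hts θ)).continuousAt
  have hcoeff := integral_exp_mul_eq_integral_cos_mul hcont
    (fun θ => by simp [angularProfile, cos_two_pi_sub]) n
  have hkernel (θ : ℝ) : Complex.exp (-Complex.I * n * θ) * (coneKernel α t θ s 0 : ℂ)
      = ((sin α * cos α * s : ℝ) : ℂ)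
        * (Complex.exp (-Complex.I * n * θ) * angularProfile (sin α ^ 2) t s θ) := by
    rw [coneKernel_eq_mul_angularProfile, Complex.ofReal_mul, mul_left_comm]
  rw [modalKernel, Complex.ofReal_mul, Complex.ofReal_mul (sin α * cos α * s), ← hcoeff]
  simp only [hkernel, intervalIntegral.integral_const_mul]

theorem stronglyMeasurable_modalKernel (α : ℝ) (n : ℤ) :
    StronglyMeasurable (Function.uncurry (modalKernel α n)) := by
  have hmeas : Measurable fun q : (ℝ × ℝ) × ℝ =>
      Complex.exp (-Complex.I * n * q.2) * (coneKernel α q.1.1 q.2 q.1.2 0 : ℂ) := by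
    simp only [coneKernel_eq_mul_angularProfile, angularProfile, chord]
    fun_prop
  have hint := (hmeas.stronglyMeasurable.integral_prod_right'
    (ν := volume.restrict (Set.Ioc 0 (2 * π)))).const_mul ((1 / (2 * π) : ℝ) : ℂ)
  convert hint using 2 with p
  rw [← intervalIntegral.integral_of_le two_pi_pos.le]
  rfl

/-- A majorant of the `n`-th modal kernel, multiplied by `sin α`, that is symmetric in `t` and `s`;
the symmetry makes one estimate serve both for the rows and for the columns of the kernel. -/
noncomputable def modalMajorant (α : ℝ) (n : ℤ) (t s : ℝ) : ℝ≥0∞ :=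
  ∫⁻ θ in Set.Ioc 0 (2 * π), ENNReal.ofReal (|cos α| / (2 * π) * modeWeight n θ)
    * ENNReal.ofReal (sin α ^ 2 * ((t + s) / chord (sin α ^ 2 * (1 - cos θ)) t s ^ 3))

theorem modalMajorant_comm (α : ℝ) (n : ℤ) (t s : ℝ) :
    modalMajorant α n t s = modalMajorant α n s t := by
  simp only [modalMajorant, add_comm t, chord_comm _ t]

theorem norm_modalKernel_mul_sin_le (α : ℝ) (n : ℤ) (ht : 0 ≤ t) (hs : 0 ≤ s) (hts : t ≠ s) :
    ‖modalKernel α n t s * sin α‖ ≤ ∫ θ in (0 : ℝ)..(2 * π), |cos α| / (2 * π) * modeWeight n θ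
      * (sin α ^ 2 * ((t + s) / chord (sin α ^ 2 * (1 - cos θ)) t s ^ 3)) := by
  rw [modalKernel_eq_integral_cos α n ht hs hts, ← Complex.ofReal_mul, Complex.norm_real,
    norm_eq_abs]
  generalize hI : ∫ θ in (0 : ℝ)..(2 * π), cos (n * θ) * angularProfile (sin α ^ 2) t s θ = I
  calc |1 / (2 * π) * (sin α * cos α * s * I) * sin α|
      = |cos α| / (2 * π) * (sin α ^ 2 * s) * |I| := by
        rw [← sq_abs (sin α)]
        simp only [abs_mul, abs_div, abs_one, abs_two, abs_of_pos pi_pos, abs_of_nonneg hs]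
        ring
    _ ≤ |cos α| / (2 * π) * (sin α ^ 2 * (t + s)) * ∫ θ in (0 : ℝ)..(2 * π),
          modeWeight n θ / chord (sin α ^ 2 * (1 - cos θ)) t s ^ 3 := by
        gcongr
        · linarith
        · exact hI ▸ abs_integral_cos_mul_angularProfile_le (sq_nonneg _) ht hs hts n
    _ = _ := by
        rw [← intervalIntegral.integral_const_mul]
        refine intervalIntegral.integral_congr fun θ _ => ?_
        ring

theorem enorm_modalKernel_mul_sin_le (α : ℝ) (n : ℤ) (ht : 0 ≤ t) (hs : 0 ≤ s) (hts : t ≠ s) :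
    ‖modalKernel α n t s * sin α‖ₑ ≤ modalMajorant α n t s := by
  have hpos (θ : ℝ) := chord_one_sub_cos_pos (sq_nonneg (sin α)) ht hs hts θ
  have hweight (θ : ℝ) : 0 ≤ |cos α| / (2 * π) * modeWeight n θ :=
    mul_nonneg (by positivity) (modeWeight_nonneg n θ)
  have hradial (θ : ℝ) :
      0 ≤ sin α ^ 2 * ((t + s) / chord (sin α ^ 2 * (1 - cos θ)) t s ^ 3) := by
    have := hpos θ
    positivity
  have hcont : Continuous fun θ => |cos α| / (2 * π) * modeWeight n θ
      * (sin α ^ 2 * ((t + s) / chord (sin α ^ 2 * (1 - cos θ)) t s ^ 3)) :=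
    ((continuous_modeWeight n).const_mul _).mul ((continuous_const.div
      ((continuous_chord_one_sub_cos _ t s).pow 3) fun θ => (pow_pos (hpos θ) 3).ne').const_mul _)
  rw [← ofReal_norm]
  refine (ENNReal.ofReal_le_ofReal (norm_modalKernel_mul_sin_le α n ht hs hts)).trans_eq ?_
  rw [intervalIntegral.integral_of_le two_pi_pos.le, ofReal_integral_eq_lintegral_ofReal
    (hcont.integrableOn_Ioc) (.of_forall fun θ => mul_nonneg (hweight θ) (hradial θ))]
  simp only [ENNReal.ofReal_mul (hweight _)]
  rfl

theorem lintegral_mul_add_div_chord_cube_le {σ κ : ℝ} (hσ : 0 ≤ σ) (hκ : 0 < κ) (ht : 0 < t) :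
    ∫⁻ s in Set.Ioi 0, ENNReal.ofReal (σ * ((t + s) / chord (σ * κ) t s ^ 3))
      ≤ ENNReal.ofReal (2 / (κ * t)) := by
  rcases hσ.eq_or_lt with rfl | hσ
  · simp
  simp only [ENNReal.ofReal_mul hσ.le]
  rw [lintegral_const_mul' _ _ ENNReal.ofReal_ne_top,
    lintegral_add_div_chord_cube (mul_pos hσ hκ) ht, ← ENNReal.ofReal_mul hσ.le]
  refine ENNReal.ofReal_le_ofReal (le_of_eq ?_)
  field_simp

theorem lintegral_modeWeight_div_one_sub_cos_le (n : ℤ) :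
    ∫⁻ θ in Set.Ioc 0 (2 * π), ENNReal.ofReal (modeWeight n θ / (1 - cos θ))
      ≤ ENNReal.ofReal (2 * π * (6 / (n.natAbs + 1))) := by
  obtain ⟨hint, hle⟩ := integral_modeWeight_div_one_sub_cos_le n
  rw [intervalIntegral.integral_of_le two_pi_pos.le] at hle
  rw [← ofReal_integral_eq_lintegral_ofReal hint.1 (.of_forall fun θ =>
    div_nonneg (modeWeight_nonneg n θ) (sub_nonneg.2 (cos_le_one θ)))]
  exact ENNReal.ofReal_le_ofReal hle

theorem lintegral_modalMajorant_eq (α : ℝ) (n : ℤ) (t : ℝ) :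
    ∫⁻ s in Set.Ioi 0, modalMajorant α n t s
      = ∫⁻ θ in Set.Ioc 0 (2 * π), ENNReal.ofReal (|cos α| / (2 * π) * modeWeight n θ)
          * ∫⁻ s in Set.Ioi 0, ENNReal.ofReal
              (sin α ^ 2 * ((t + s) / chord (sin α ^ 2 * (1 - cos θ)) t s ^ 3)) := by
  have hmeas : Measurable fun p : ℝ × ℝ => ENNReal.ofReal (|cos α| / (2 * π) * modeWeight n p.2)
      * ENNReal.ofReal (sin α ^ 2 * ((t + p.1) / chord (sin α ^ 2 * (1 - cos p.2)) t p.1 ^ 3)) := by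
    have := (continuous_modeWeight n).measurable
    unfold chord
    fun_prop
  simp only [modalMajorant]
  rw [lintegral_lintegral_swap hmeas.aemeasurable]
  simp only [lintegral_const_mul' _ _ ENNReal.ofReal_ne_top]

theorem lintegral_modalMajorant_le (α : ℝ) (n : ℤ) (ht : 0 < t) :
    ∫⁻ s in Set.Ioi 0, modalMajorant α n t s
      ≤ ENNReal.ofReal (12 * |cos α| / (n.natAbs + 1)) * (ENNReal.ofReal t)⁻¹ := by
  have hcos_lt : ∀ᵐ θ ∂volume.restrict (Set.Ioc 0 (2 * π)), cos θ < 1 := by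
    rw [← restrict_Ioo_eq_restrict_Ioc]
    exact ae_restrict_of_forall_mem measurableSet_Ioo fun θ hθ => cos_lt_one_of_mem_Ioo hθ
  have hconst : 0 ≤ |cos α| / (π * t) := by positivity
  calc ∫⁻ s in Set.Ioi 0, modalMajorant α n t s
      ≤ ∫⁻ θ in Set.Ioc 0 (2 * π), ENNReal.ofReal (|cos α| / (π * t))
          * ENNReal.ofReal (modeWeight n θ / (1 - cos θ)) := by
        rw [lintegral_modalMajorant_eq]
        refine lintegral_mono_ae ?_
        filter_upwards [hcos_lt] with θ hθ
        have hκ : 0 < 1 - cos θ := sub_pos.2 hθ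
        have hweight := modeWeight_nonneg n θ
        grw [lintegral_mul_add_div_chord_cube_le (sq_nonneg _) hκ ht]
        rw [← ENNReal.ofReal_mul (by positivity), ← ENNReal.ofReal_mul hconst]
        refine ENNReal.ofReal_le_ofReal (le_of_eq ?_)
        field_simp
    _ ≤ ENNReal.ofReal (|cos α| / (π * t)) * ENNReal.ofReal (2 * π * (6 / (n.natAbs + 1))) := by
        rw [lintegral_const_mul' _ _ ENNReal.ofReal_ne_top]
        gcongr
        exact lintegral_modeWeight_div_one_sub_cos_le n
    _ = ENNReal.ofReal (12 * |cos α| / (n.natAbs + 1)) * (ENNReal.ofReal t)⁻¹ := by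
        rw [← ENNReal.ofReal_inv_of_pos ht, ← ENNReal.ofReal_mul hconst,
          ← ENNReal.ofReal_mul (by positivity)]
        congr 1
        field_simp
        ring

end ModalKernel

/-! ### The modal operators -/

instance : SFinite muT := by
  unfold muT
  infer_instance

theorem ae_muT_pos : ∀ᵐ t ∂muT, 0 < t :=
  (withDensity_absolutelyContinuous _ _).ae_le (ae_restrict_mem measurableSet_Ioi)

theorem lintegral_mul_inv_muT {g : ℝ → ℝ≥0∞} (hg : Measurable g) :
    ∫⁻ t, g t * (ENNReal.ofReal t)⁻¹ ∂muT = ∫⁻ t in Set.Ioi 0, g t := by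
  unfold muT
  rw [lintegral_withDensity_eq_lintegral_mul _ (by fun_prop) (by fun_prop)]
  refine setLIntegral_congr_fun measurableSet_Ioi fun t ht => ?_
  have hpos : ENNReal.ofReal t ≠ 0 := by simpa using ht
  simp only [Pi.mul_apply]
  rw [mul_left_comm, ENNReal.mul_inv_cancel hpos ENNReal.ofReal_ne_top, mul_one]

theorem toReal_ofReal_smul_ae_eq_mul (g : ℝ → ℂ) :
    (fun t => (ENNReal.ofReal t).toReal • g t)
      =ᵐ[volume.restrict (Set.Ioi 0)] fun t => g t * (t : ℂ) := by
  filter_upwards [ae_restrict_mem measurableSet_Ioi] with t ht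
  rw [ENNReal.toReal_ofReal (le_of_lt ht), Complex.real_smul, mul_comm]

theorem integrable_muT_iff (g : ℝ → ℂ) :
    Integrable g muT ↔ IntegrableOn (fun t => g t * (t : ℂ)) (Set.Ioi 0) := by
  unfold muT
  rw [integrable_withDensity_iff_integrable_smul' (by fun_prop) (by simp)]
  exact integrable_congr (toReal_ofReal_smul_ae_eq_mul g)

theorem integral_muT (g : ℝ → ℂ) : ∫ t, g t ∂muT = ∫ t in Set.Ioi 0, g t * (t : ℂ) := by
  unfold muT
  rw [integral_withDensity_eq_integral_toReal_smul (by fun_prop) (by simp)]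
  exact integral_congr_ae (toReal_ofReal_smul_ae_eq_mul g)

/-- `T` is the operator `T_n` on `L²((0, ∞), t dt)` whose kernel is the `n`-th modal kernel. -/
def IsModalOperator (α : ℝ) (n : ℤ) (T : Lp ℂ 2 muT →L[ℂ] Lp ℂ 2 muT) : Prop :=
  ∀ f : Lp ℂ 2 muT, ∀ᵐ t ∂muT,
    IntegrableOn (fun t' => modalKernel α n t t' * f t' * ((sin α * t' : ℝ) : ℂ)) (Set.Ioi 0) ∧
    T f t = ∫ t' in Set.Ioi (0 : ℝ), modalKernel α n t t' * f t' * ((sin α * t' : ℝ) : ℂ)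

theorem isModalOperator_iff {α : ℝ} {n : ℤ} {T : Lp ℂ 2 muT →L[ℂ] Lp ℂ 2 muT} :
    IsModalOperator α n T ↔ IsIntegralOperator (fun t s => modalKernel α n t s * sin α) T := by
  have hintegrand (f : Lp ℂ 2 muT) (t s : ℝ) : modalKernel α n t s * sin α * f s * s
      = modalKernel α n t s * f s * ((sin α * s : ℝ) : ℂ) := by push_cast; ring
  simp only [IsModalOperator, IsIntegralOperator, integrable_muT_iff, integral_muT, hintegrand]

theorem absolutelyBoundedKernel_modalKernel (α : ℝ) (n : ℤ) :
    AbsolutelyBoundedKernel muT muT (fun t s => modalKernel α n t s * sin α)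
      (12 * |cos α| / (n.natAbs + 1)).toNNReal := by
  have hK : StronglyMeasurable (Function.uncurry fun t s => modalKernel α n t s * sin α) :=
    (stronglyMeasurable_modalKernel α n).mul_const _
  have hK_enorm : Measurable (Function.uncurry fun t s => ‖modalKernel α n t s * sin α‖ₑ) :=
    hK.enorm
  have hne (t : ℝ) : ∀ᵐ s ∂volume.restrict (Set.Ioi 0), s ≠ t := Measure.ae_ne _ t
  refine .of_schur hK (p := fun t => (ENNReal.ofReal t)⁻¹) (by fun_prop)
    (q := fun t => (ENNReal.ofReal t)⁻¹) (by fun_prop) ?_ ?_ ?_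
  · filter_upwards [ae_muT_pos] with t ht
    simpa using ht
  · filter_upwards [ae_muT_pos] with t ht
    rw [lintegral_mul_inv_muT hK_enorm.of_uncurry_left]
    refine (lintegral_mono_ae ?_).trans (lintegral_modalMajorant_le α n ht)
    filter_upwards [hne t, ae_restrict_mem measurableSet_Ioi] with s hst hs
    exact enorm_modalKernel_mul_sin_le α n ht.le (le_of_lt hs) hst.symm
  · filter_upwards [ae_muT_pos] with s hs
    rw [lintegral_mul_inv_muT hK_enorm.of_uncurry_right]
    refine (lintegral_mono_ae ?_).trans (lintegral_modalMajorant_le α n hs)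
    filter_upwards [hne s, ae_restrict_mem measurableSet_Ioi] with t hts ht
    rw [modalMajorant_comm]
    exact enorm_modalKernel_mul_sin_le α n (le_of_lt ht) hs.le hts

theorem modal_operator_bound_general (α : ℝ) (n : ℤ) :
    ∃ T : Lp ℂ 2 muT →L[ℂ] Lp ℂ 2 muT, IsModalOperator α n T ∧
      ‖T‖ ≤ 12 * |cos α| / (n.natAbs + 1) ∧
      ∀ T' : Lp ℂ 2 muT →L[ℂ] Lp ℂ 2 muT, IsModalOperator α n T' → T' = T := by
  obtain ⟨T, hT, hnorm⟩ := (absolutelyBoundedKernel_modalKernel α n).exists_isIntegralOperator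
    ((stronglyMeasurable_modalKernel α n).mul_const _)
  rw [coe_toNNReal _ (by positivity)] at hnorm
  exact ⟨T, isModalOperator_iff.2 hT, hnorm, fun T' hT' => hT.unique (isModalOperator_iff.1 hT')⟩

/-- For every `n ∈ ℤ` there is a unique bounded operator `T_n` on `L²((0,∞), t dt)`
given a.e. by `T_n f(t) = ∫₀^∞ K_n^α(t,t') f(t') sin α · t' dt'` (the integral
converging absolutely), and there is `C > 0` depending only on `α` such that
`‖T_n‖ ≤ C/(|n|+1)` for all `n`. -/
theorem modal_operator_bound (α : ℝ) (hα0 : 0 < α) (hαπ : α < π) (hα2 : α ≠ π / 2) :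
    ∃ C : ℝ, 0 < C ∧ ∀ n : ℤ,
      ∃ T : Lp ℂ 2 muT →L[ℂ] Lp ℂ 2 muT,
        (∀ f : Lp ℂ 2 muT, ∀ᵐ t ∂muT,
          IntegrableOn (fun t' => modalKernel α n t t' * f t' * ((sin α * t' : ℝ) : ℂ))
            (Set.Ioi 0) ∧
          (T f : ℝ → ℂ) t =
            ∫ t' in Set.Ioi (0:ℝ), modalKernel α n t t' * f t' * ((sin α * t' : ℝ) : ℂ)) ∧
        ‖T‖ ≤ C / ((n.natAbs : ℝ) + 1) ∧
        ∀ T' : Lp ℂ 2 muT →L[ℂ] Lp ℂ 2 muT,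
          (∀ f : Lp ℂ 2 muT, ∀ᵐ t ∂muT,
            IntegrableOn (fun t' => modalKernel α n t t' * f t' * ((sin α * t' : ℝ) : ℂ))
              (Set.Ioi 0) ∧
            (T' f : ℝ → ℂ) t =
              ∫ t' in Set.Ioi (0:ℝ), modalKernel α n t t' * f t' * ((sin α * t' : ℝ) : ℂ)) →
          T' = T := by
  refine ⟨12, by norm_num, fun n => ?_⟩
  obtain ⟨T, hT, hnorm, hunique⟩ := modal_operator_bound_general α n
  refine ⟨T, hT, hnorm.trans ?_, hunique⟩
  gcongr
  exact mul_le_of_le_one_right (by norm_num) (abs_cos_le_one α)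
end

section
/- There is a unique bounded linear operator K on the Hilbert space L²((0,∞)×(0,2π), sin α · t dt dθ) such that for every f in this space and almost every (t,θ), Kf(t,θ) = (1/(2π)) ∫₀^{2π} ∫₀^∞ K^{Γ_α}(t,θ,t',θ') f(t',θ') sin α · t' dt' dθ', the integral converging absolutely. The spectrum of K equals ⋃_{n∈ℤ} Π_n, where for each n ∈ ℤ the set Π_n = {λ_n(ξ) : ξ ∈ ℝ} ∪ {0} with λ_n(ξ) = sin α · ∫₀^∞ t^{1+iξ} K_n^α(t,1) dt/t. Moreover, there is a constant C > 0, depending only on α, such that sup{|z| : z ∈ Π_n} ≤ C/(|n|+1) for all n ∈ ℤ. -/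
open Real

open MeasureTheory

/-- The measure `sin α · t dt dθ` on `(0,∞) × (0,2π)`. -/
noncomputable def muCone (α : ℝ) : Measure (ℝ × ℝ) :=
  (((volume.restrict (Set.Ioi (0:ℝ))).withDensity fun t => ENNReal.ofReal (sin α * t)).prod
    (volume.restrict (Set.Ioo (0:ℝ) (2 * π))))

/-- The generalized eigenvalue `λ_n(ξ) = sin α · ∫₀^∞ t^{1+iξ} K_n^α(t,1) dt/t`. -/
noncomputable def modalEigenvalue (α : ℝ) (n : ℤ) (ξ : ℝ) : ℂ :=
  ((sin α : ℝ) : ℂ) *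
    ∫ t in Set.Ioi (0:ℝ), (t : ℂ) ^ (1 + Complex.I * (ξ : ℂ)) * modalKernel α n t 1 * (t : ℂ)⁻¹

/-- The closed curve `Π_n = {λ_n(ξ) : ξ ∈ ℝ} ∪ {0}`. -/
noncomputable def modalCurve (α : ℝ) (n : ℤ) : Set ℂ :=
  {z : ℂ | ∃ ξ : ℝ, z = modalEigenvalue α n ξ} ∪ {0}

/-!
In the coordinates `t = exp x`, `θ`, and after conjugating by the square root of the density
`sin α * t ^ 2 dx dθ`, the homogeneity and the rotational symmetry of the kernel turn the operator
into convolution with an integrable function `k` on the group `ℝ × ℝ/2πℤ`. The numbers `λ_n(ξ)` are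
the integrals of `k` against the unitary characters of this group. Each of them is an approximate
eigenvalue, with the characters damped by `exp (-ε |x|)` as approximate eigenvectors; conversely,
Gelfand theory of the commutative Banach algebra generated by translations and `k` shows that every
nonzero point of the spectrum is an integral of `k` against a character.

If `χ` has angular frequency `n`, a rotation by `π / |n|` changes its sign, so `4 ∫ k χ` is the
integral of `χ` against a second difference of `k`. The `L¹` norm of that difference is
`O(1 / |n|)`, since the radial integral of the second difference with step `h` at angle `θ` is at
most a constant times `(1 + (θ / h) ^ 2)⁻¹`. In particular `λ_n(ξ) → 0`, which puts `0` in the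
closed spectrum.
-/

namespace ConeLayerPotential

open Set Filter Topology

/-! ### Translations of `Lᵖ` -/

section Translation

variable {G : Type*} [AddCommGroup G] [MeasurableSpace G] [MeasurableAdd G]
  (μ : Measure G) [μ.IsAddRightInvariant] (p : ENNReal) [Fact (1 ≤ p)]

/-- The translation representation of a group on `Lᵖ`: `translation μ p g f x = f (x - g)`. -/
noncomputable def translation : AddChar G (Lp ℂ p μ →L[ℂ] Lp ℂ p μ) where
  toFun g := (Lp.compMeasurePreservingₗᵢ ℂ (fun x => x - g)
    (measurePreserving_sub_right μ g)).toContinuousLinearMap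
  map_zero_eq_one' := by
    ext1 f
    apply Lp.ext
    filter_upwards [Lp.coeFn_compMeasurePreserving f (measurePreserving_sub_right μ (0 : G))]
      with x hx
    exact hx.trans (congrArg f (sub_zero x))
  map_add_eq_mul' g h := by
    ext1 f
    apply Lp.ext
    have hh := Lp.coeFn_compMeasurePreserving f (measurePreserving_sub_right μ h)
    filter_upwards [Lp.coeFn_compMeasurePreserving f (measurePreserving_sub_right μ (g + h)),
      Lp.coeFn_compMeasurePreserving
        (Lp.compMeasurePreserving _ (measurePreserving_sub_right μ h) f)
        (measurePreserving_sub_right μ g),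
      (measurePreserving_sub_right μ g).quasiMeasurePreserving.ae_eq_comp hh] with x hgh hg hh
    exact hgh.trans ((congrArg f (sub_sub x g h).symm).trans (hg.trans hh).symm)

variable {μ p}

theorem coeFn_translation (g : G) (f : Lp ℂ p μ) :
    translation μ p g f =ᵐ[μ] fun x => f (x - g) :=
  Lp.coeFn_compMeasurePreserving f (measurePreserving_sub_right μ g)

theorem norm_translation_apply (g : G) (f : Lp ℂ p μ) : ‖translation μ p g f‖ = ‖f‖ :=
  LinearIsometry.norm_map _ _

theorem continuous_translation_apply [TopologicalSpace G] [IsTopologicalAddGroup G] [BorelSpace G]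
    [R1Space G] [LocallyCompactSpace G] [IsLocallyFiniteMeasure μ]
    [μ.InnerRegularCompactLTTop] (hp : p ≠ ⊤) (f : Lp ℂ p μ) :
    Continuous fun g => translation μ p g f :=
  Continuous.compMeasurePreservingLp (f := fun _ => f) continuous_const
    (ContinuousMap.mk (fun a : G × G => a.2 - a.1) (by fun_prop)).curry.continuous
    (measurePreserving_sub_right μ) hp

end Translation

/-! ### Integrated representations -/

section IntegratedForm

variable {G : Type*} [TopologicalSpace G] {E : Type*} [NormedAddCommGroup E] [NormedSpace ℂ E]

/-- A strongly continuous representation of an additive group by contractions. -/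
structure IsContractiveRep [AddMonoid G] (T : AddChar G (E →L[ℂ] E)) : Prop where
  norm_le_one : ∀ g, ‖T g‖ ≤ 1
  continuous_apply : ∀ v, Continuous fun g => T g v

namespace IsContractiveRep

section AddMonoid

variable [AddMonoid G] {T : AddChar G (E →L[ℂ] E)}

theorem norm_apply_le (hT : IsContractiveRep T) (g : G) (v : E) : ‖T g v‖ ≤ ‖v‖ :=
  ((T g).le_opNorm v).trans (mul_le_of_le_one_left (norm_nonneg v) (hT.norm_le_one g))

variable [SecondCountableTopology G] [MeasurableSpace G] [BorelSpace G] {μ : Measure G}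

theorem integrable_smul_apply (hT : IsContractiveRep T) {f : G → ℂ} (hf : Integrable f μ)
    (v : E) :
    Integrable (fun g => f g • T g v) μ := by
  refine (hf.norm.mul_const ‖v‖).mono'
    (hf.1.smul (hT.continuous_apply v).aestronglyMeasurable) (.of_forall fun g => ?_)
  rw [norm_smul]
  gcongr
  exact hT.norm_apply_le g v

variable (hT : IsContractiveRep T)

variable (μ) in
/-- The integrated form of a contractive representation: the action
`f ↦ ∫ g, f g • T g` of `L¹` on the representation space. -/
noncomputable def integratedForm : Lp ℂ 1 μ →L[ℂ] E →L[ℂ] E :=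
  LinearMap.mkContinuous₂
    (LinearMap.mk₂ ℂ (fun (f : Lp ℂ 1 μ) (v : E) => ∫ g, f g • T g v ∂μ)
      (fun f₁ f₂ v => by
        rw [← integral_add (hT.integrable_smul_apply (L1.integrable_coeFn f₁) v)
          (hT.integrable_smul_apply (L1.integrable_coeFn f₂) v)]
        refine integral_congr_ae ?_
        filter_upwards [Lp.coeFn_add f₁ f₂] with g hg
        rw [hg, Pi.add_apply, add_smul])
      (fun c f v => by
        rw [← integral_smul]
        refine integral_congr_ae ?_
        filter_upwards [Lp.coeFn_smul c f] with g hg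
        rw [hg, Pi.smul_apply, smul_assoc])
      (fun f v₁ v₂ => by
        rw [← integral_add (hT.integrable_smul_apply (L1.integrable_coeFn f) v₁)
          (hT.integrable_smul_apply (L1.integrable_coeFn f) v₂)]
        simp only [map_add, smul_add])
      (fun c f v => by
        rw [← integral_smul]
        simp only [map_smul, smul_comm c]))
    1 (fun f v => by
      rw [one_mul, L1.norm_eq_integral_norm, ← integral_mul_const]
      refine norm_integral_le_of_norm_le ((L1.integrable_coeFn f).norm.mul_const _)
        (.of_forall fun g => ?_)
      rw [norm_smul]
      gcongr
      exact hT.norm_apply_le g v)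

theorem integratedForm_apply (f : Lp ℂ 1 μ) (v : E) :
    hT.integratedForm μ f v = ∫ g, f g • T g v ∂μ :=
  rfl

end AddMonoid

variable [CompleteSpace E] [AddCommGroup G] [SecondCountableTopology G] [MeasurableSpace G]
  [BorelSpace G] {μ : Measure G} {T : AddChar G (E →L[ℂ] E)} (hT : IsContractiveRep T)

theorem commute_integratedForm (g : G) (f : Lp ℂ 1 μ) : Commute (T g) (hT.integratedForm μ f) := by
  ext v
  simp only [mul_apply_eq_comp, integratedForm_apply]
  rw [← ContinuousLinearMap.integral_comp_comm _
    (hT.integrable_smul_apply (L1.integrable_coeFn f) v)]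
  congr 1 with h
  rw [map_smul, ← mul_apply_eq_comp, ← mul_apply_eq_comp,
    ← T.map_add_eq_mul, ← T.map_add_eq_mul, add_comm]

theorem mul_integratedForm [IsTopologicalAddGroup G] [μ.IsAddRightInvariant] (g : G)
    (f : Lp ℂ 1 μ) :
    T g * hT.integratedForm μ f = hT.integratedForm μ (translation μ 1 g f) := by
  ext v
  simp only [mul_apply_eq_comp, integratedForm_apply]
  rw [← ContinuousLinearMap.integral_comp_comm _
    (hT.integrable_smul_apply (L1.integrable_coeFn f) v), ← integral_sub_right_eq_self _ g]
  refine integral_congr_ae ?_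
  filter_upwards [coeFn_translation g f] with h hh
  rw [hh, map_smul, ← mul_apply_eq_comp, ← T.map_add_eq_mul, add_sub_cancel]

theorem continuous_mul_integratedForm [IsTopologicalAddGroup G] [LocallyCompactSpace G]
    [IsLocallyFiniteMeasure μ] [μ.InnerRegularCompactLTTop] [μ.IsAddRightInvariant]
    (f : Lp ℂ 1 μ) : Continuous fun g => T g * hT.integratedForm μ f := by
  simp only [hT.mul_integratedForm]
  exact (hT.integratedForm μ).continuous.comp
    (continuous_translation_apply ENNReal.one_ne_top f)

theorem integratedForm_mul_self [IsTopologicalAddGroup G] [LocallyCompactSpace G]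
    [IsLocallyFiniteMeasure μ] [μ.InnerRegularCompactLTTop] [μ.IsAddRightInvariant]
    (f : Lp ℂ 1 μ) :
    hT.integratedForm μ f * hT.integratedForm μ f =
      ∫ g, f g • (T g * hT.integratedForm μ f) ∂μ := by
  have hint : Integrable (fun g => f g • (T g * hT.integratedForm μ f)) μ := by
    refine ((L1.integrable_coeFn f).norm.mul_const ‖hT.integratedForm μ f‖).mono'
      ((L1.integrable_coeFn f).1.smul (hT.continuous_mul_integratedForm f).aestronglyMeasurable)
      (.of_forall fun g => ?_)
    rw [norm_smul]
    gcongr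
    exact (norm_mul_le _ _).trans (mul_le_of_le_one_left (norm_nonneg _) (hT.norm_le_one g))
  ext v
  rw [ContinuousLinearMap.integral_apply hint]
  rfl

end IsContractiveRep

end IntegratedForm

/-! ### The nonzero spectrum consists of character integrals -/

section Gelfand

variable {G : Type*} [AddCommMonoid G] [TopologicalSpace G] [SecondCountableTopology G]
  [MeasurableSpace G] [OpensMeasurableSpace G] {μ : Measure G}

/-- A character of the Banach algebra sending `a` to `z ≠ 0` pulls back to a character of `G`;
it is continuous because `χ (T g) = χ (T g * a) / z`. -/
theorem exists_addChar_integral_eq_of_mem_spectrum {A : Type*} [NormedCommRing A]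
    [NormedAlgebra ℂ A] [CompleteSpace A] {T : AddChar G A} {a : A} {f : G → ℂ}
    (hf : Integrable f μ) (hT : ∀ g, ‖T g‖ ≤ 1) (hcont : Continuous fun g => T g * a)
    (hsq : a * a = ∫ g, f g • (T g * a) ∂μ) {z : ℂ} (hz : z ∈ spectrum ℂ a) (hz₀ : z ≠ 0) :
    ∃ χ : AddChar G ℂ, Continuous χ ∧ (∀ g, ‖χ g‖ ≤ 1) ∧ ∫ g, f g * χ g ∂μ = z := by
  obtain ⟨φ, hφ⟩ := WeakDual.CharacterSpace.exists_apply_eq_zero (spectrum.mem_iff.1 hz)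
  have hφa : φ a = z := by
    rw [map_sub, AlgHomClass.commutes, sub_eq_zero] at hφ
    exact hφ.symm
  have hφT : ∀ g, φ (T g) = φ (T g * a) / z := fun g => by
    rw [map_mul, hφa, mul_div_cancel_right₀ _ hz₀]
  have hint : Integrable (fun g => f g • (T g * a)) μ := by
    refine (hf.norm.mul_const ‖a‖).mono' (hf.1.smul hcont.aestronglyMeasurable)
      (.of_forall fun g => ?_)
    rw [norm_smul]
    gcongr
    exact (norm_mul_le _ _).trans (mul_le_of_le_one_left (norm_nonneg _) (hT g))
  refine ⟨(AlgHomClass.toAlgHom φ : A →* ℂ).compAddChar T, ?_, fun g => ?_, ?_⟩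
  · exact (((map_continuous φ).comp hcont).div_const z).congr fun g => (hφT g).symm
  · have hone : ‖(1 : A)‖ ≤ 1 := T.map_zero_eq_one ▸ hT 0
    exact (spectrum.norm_le_norm_mul_of_mem (AlgHom.apply_mem_spectrum φ (T g))).trans
      (mul_le_one₀ (hT g) (norm_nonneg _) hone)
  · have hφsq : z * z = (∫ g, f g * φ (T g) ∂μ) * z := by
      rw [← integral_mul_const, ← hφa, ← map_mul, hsq]
      refine ((WeakDual.CharacterSpace.toCLM φ).integral_comp_comm hint).symm.trans ?_
      congr 1 with g
      change φ (f g • (T g * a)) = _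
      rw [map_smul, map_mul, smul_eq_mul, mul_assoc]
    exact (mul_right_cancel₀ hz₀ hφsq).symm

theorem exists_addChar_integral_eq_of_mem_spectrum_of_commute {B : Type*} [NormedRing B]
    [NormedAlgebra ℂ B] [CompleteSpace B] {T : AddChar G B} {a : B} {f : G → ℂ}
    (hf : Integrable f μ) (hT : ∀ g, ‖T g‖ ≤ 1) (hcomm : ∀ g, Commute (T g) a)
    (hcont : Continuous fun g => T g * a) (hsq : a * a = ∫ g, f g • (T g * a) ∂μ)
    {z : ℂ} (hz : z ∈ spectrum ℂ a) (hz₀ : z ≠ 0) :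
    ∃ χ : AddChar G ℂ, Continuous χ ∧ (∀ g, ‖χ g‖ ≤ 1) ∧ ∫ g, f g * χ g ∂μ = z := by
  have hs : ∀ b ∈ insert a (range T), ∀ c ∈ insert a (range T), b * c = c * b := by
    rintro b (rfl | ⟨g, rfl⟩) c (rfl | ⟨h, rfl⟩)
    · rfl
    · exact (hcomm h).symm
    · exact hcomm g
    · rw [← T.map_add_eq_mul, ← T.map_add_eq_mul, add_comm]
  have := Algebra.isMulCommutative_adjoin ℂ hs
  let A := (Algebra.adjoin ℂ (insert a (range T))).topologicalClosure
  have hA : ∀ b ∈ insert a (range T), b ∈ A := fun b hb =>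
    Subalgebra.le_topologicalClosure _ (Algebra.subset_adjoin hb)
  let _ : NormedCommRing A :=
    { (inferInstance : NormedRing A) with
      mul_comm := (Subalgebra.commRingTopologicalClosure (Algebra.adjoin ℂ (insert a (range T)))
        IsMulCommutative.is_comm.comm).mul_comm }
  have : CompleteSpace A := (Subalgebra.isClosed_topologicalClosure _).completeSpace_coe
  let T' : AddChar G A :=
    { toFun := fun g => ⟨T g, hA _ (mem_insert_of_mem a (mem_range_self g))⟩
      map_zero_eq_one' := Subtype.ext T.map_zero_eq_one
      map_add_eq_mul' := fun g h => Subtype.ext (T.map_add_eq_mul g h) }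
  let a' : A := ⟨a, hA a (mem_insert a _)⟩
  have hsq' : a' * a' = ∫ g, f g • (T' g * a') ∂μ :=
    Subtype.ext <| hsq.trans <|
      (Subalgebra.toSubmodule A).subtypeₗᵢ.integral_comp_comm fun g => f g • (T' g * a')
  have hz' : z ∈ spectrum ℂ a' := fun hu => hz (hu.map A.val)
  exact exists_addChar_integral_eq_of_mem_spectrum hf (T := T') hT
    (hcont.subtype_mk _) hsq' hz' hz₀

theorem IsContractiveRep.exists_addChar_integral_eq_of_mem_spectrum {G : Type*} [AddCommGroup G]
    [TopologicalSpace G] [IsTopologicalAddGroup G] [SecondCountableTopology G]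
    [LocallyCompactSpace G] [MeasurableSpace G] [BorelSpace G] {μ : Measure G}
    [IsLocallyFiniteMeasure μ] [μ.InnerRegularCompactLTTop] [μ.IsAddRightInvariant]
    {E : Type*} [NormedAddCommGroup E] [NormedSpace ℂ E] [CompleteSpace E]
    {T : AddChar G (E →L[ℂ] E)} (hT : IsContractiveRep T) (f : Lp ℂ 1 μ) {z : ℂ}
    (hz : z ∈ spectrum ℂ (hT.integratedForm μ f)) (hz₀ : z ≠ 0) :
    ∃ χ : AddChar G ℂ, Continuous χ ∧ (∀ g, ‖χ g‖ ≤ 1) ∧ ∫ g, f g * χ g ∂μ = z :=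
  exists_addChar_integral_eq_of_mem_spectrum_of_commute (L1.integrable_coeFn f) hT.norm_le_one
    (fun g => hT.commute_integratedForm g f) (hT.continuous_mul_integratedForm f)
    (hT.integratedForm_mul_self f) hz hz₀

end Gelfand

/-! ### Approximate eigenvectors -/

theorem mem_spectrum_of_tendsto_sub_smul {𝕜 E ι : Type*} [NontriviallyNormedField 𝕜]
    [NormedAddCommGroup E] [NormedSpace 𝕜 E] {K : E →L[𝕜] E} {z : 𝕜} {l : Filter ι} [l.NeBot]
    {v : ι → E} (hv : ∀ i, ‖v i‖ = 1) (h : Tendsto (fun i => K (v i) - z • v i) l (𝓝 0)) :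
    z ∈ spectrum 𝕜 K := by
  rintro ⟨u, hu⟩
  have hinv : ∀ i, (↑u⁻¹ : E →L[𝕜] E) (K (v i) - z • v i) = -v i := fun i => by
    have hneg : K (v i) - z • v i = -(u : E →L[𝕜] E) (v i) := by
      rw [hu]
      simp [Algebra.algebraMap_eq_smul_one]
    rw [hneg, map_neg, ← mul_apply_eq_comp, Units.inv_mul, one_apply_eq_self]
  have hlim : Tendsto (fun i => -v i) l (𝓝 0) := by
    simpa only [hinv, map_zero, Function.comp_def] using
      ((↑u⁻¹ : E →L[𝕜] E).continuous.tendsto 0).comp h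
  have hone : Tendsto (fun _ : ι => (1 : ℝ)) l (𝓝 0) := by simpa [hv] using hlim.norm
  exact one_ne_zero (tendsto_const_nhds_iff.1 hone)

theorem IsContractiveRep.integral_mul_mem_spectrum_integratedForm {G : Type*} [AddMonoid G]
    [TopologicalSpace G] [SecondCountableTopology G] [MeasurableSpace G] [BorelSpace G]
    {μ : Measure G} {E : Type*} [NormedAddCommGroup E] [NormedSpace ℂ E] [CompleteSpace E]
    {T : AddChar G (E →L[ℂ] E)} (hT : IsContractiveRep T) (f : Lp ℂ 1 μ) {c : G → ℂ}
    (hc : AEStronglyMeasurable c μ) (hc_le : ∀ g, ‖c g‖ ≤ 1) {v : ℕ → E} (hv : ∀ n, ‖v n‖ = 1)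
    (h : ∀ g, Tendsto (fun n => T g (v n) - c g • v n) atTop (𝓝 0)) :
    ∫ g, f g * c g ∂μ ∈ spectrum ℂ (hT.integratedForm μ f) := by
  have hf := L1.integrable_coeFn f
  have hfc : Integrable (fun g => f g * c g) μ := hf.mul_bdd hc (.of_forall hc_le)
  have hsub : ∀ n, hT.integratedForm μ f (v n) - (∫ g, f g * c g ∂μ) • v n =
      ∫ g, f g • (T g (v n) - c g • v n) ∂μ := fun n => by
    rw [hT.integratedForm_apply, ← integral_smul_const,
      ← integral_sub (hT.integrable_smul_apply hf _) (hfc.smul_const _)]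
    simp only [smul_sub, smul_smul]
  refine mem_spectrum_of_tendsto_sub_smul (l := atTop) hv ?_
  simp only [hsub]
  rw [← integral_zero G E (μ := μ)]
  refine tendsto_integral_of_dominated_convergence (fun g => ‖f g‖ * 2) (fun n => ?_)
    (hf.norm.mul_const 2) (fun n => .of_forall fun g => ?_) (.of_forall fun g => ?_)
  · exact hf.1.smul ((hT.continuous_apply (v n)).aestronglyMeasurable.sub
      (hc.smul_const (v n)))
  · have hsmul : ‖c g • v n‖ ≤ 1 := by rw [norm_smul, hv, mul_one]; exact hc_le g
    have hTv : ‖T g (v n)‖ ≤ 1 := hv n ▸ hT.norm_apply_le g (v n)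
    rw [norm_smul]
    gcongr
    linarith [norm_sub_le (T g (v n)) (c g • v n)]
  · simpa only [smul_zero] using (h g).const_smul (f g)

/-! ### Damped characters -/

theorem abs_exp_sub_exp_le {a b c : ℝ} (h : |a - b| ≤ c) :
    |exp a - exp b| ≤ (exp c - 1) * exp b := by
  have hexp : exp a = exp (a - b) * exp b := by rw [← Real.exp_add, sub_add_cancel]
  rw [hexp, ← sub_one_mul, abs_mul, abs_exp]
  gcongr
  obtain ⟨hlo, hup⟩ := abs_le.1 h
  rw [abs_le]
  constructor
  · linarith [exp_le_exp.2 hlo, add_one_le_exp (-c), add_one_le_exp c,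
      Real.cosh_eq c, one_le_cosh c]
  · linarith [exp_le_exp.2 hup]

section DampedChar

variable {G : Type*} [AddCommGroup G]

/-- A continuous length function of subexponential growth, measured by integrability of all the
functions `exp (-ε * N)`. It provides the damping of the approximate eigenvectors. -/
structure IsSubexponentialLength [TopologicalSpace G] [MeasurableSpace G]
    (μ : Measure G) (N : G → ℝ) : Prop where
  continuous : Continuous N
  abs_sub_le : ∀ x g, |N (x - g) - N x| ≤ N g
  integrable_exp : ∀ ε > 0, Integrable (fun x => exp (-ε * N x)) μ

/-- The character `χ⁻¹` damped by `exp (-ε N)`: for small `ε` an approximate common eigenvector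
of all translations `g`, with eigenvalue `χ g`. -/
noncomputable def dampedChar (χ : AddChar G ℂ) (N : G → ℝ) (ε : ℝ) (x : G) : ℂ :=
  χ (-x) * exp (-ε * N x)

variable {χ : AddChar G ℂ} {N : G → ℝ} {ε : ℝ}

theorem norm_dampedChar (hχ : ∀ g, ‖χ g‖ = 1) (x : G) :
    ‖dampedChar χ N ε x‖ = exp (-ε * N x) := by
  rw [dampedChar, norm_mul, hχ, one_mul, Complex.norm_real, norm_eq_abs, abs_exp]

theorem norm_dampedChar_sub_le (hχ : ∀ g, ‖χ g‖ = 1) {x g : G} (hN : |N (x - g) - N x| ≤ N g)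
    (hε : 0 ≤ ε) :
    ‖dampedChar χ N ε (x - g) - χ g * dampedChar χ N ε x‖ ≤
      (exp (ε * N g) - 1) * ‖dampedChar χ N ε x‖ := by
  have heq : dampedChar χ N ε (x - g) - χ g * dampedChar χ N ε x =
      χ g * χ (-x) * ((exp (-ε * N (x - g)) - exp (-ε * N x) : ℝ) : ℂ) := by
    simp only [dampedChar]
    rw [neg_sub, sub_eq_add_neg g x, χ.map_add_eq_mul]
    push_cast
    ring
  rw [heq, norm_mul, norm_mul, hχ, hχ, one_mul, one_mul, Complex.norm_real, norm_eq_abs,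
    norm_dampedChar hχ]
  refine abs_exp_sub_exp_le ?_
  rw [← mul_sub, abs_mul, abs_neg, abs_of_nonneg hε]
  gcongr

variable [TopologicalSpace G] [IsTopologicalAddGroup G] [MeasurableSpace G] [BorelSpace G]
  {μ : Measure G} {p : ENNReal}

theorem memLp_dampedChar (hχc : Continuous χ) (hχ : ∀ g, ‖χ g‖ = 1)
    (hN : IsSubexponentialLength μ N) (hp₀ : p ≠ 0) (hp : p ≠ ⊤) (hε : 0 < ε) :
    MemLp (dampedChar χ N ε) p μ := by
  have hNc := hN.continuous
  have hcont : Continuous (dampedChar χ N ε) := by unfold dampedChar; fun_prop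
  rw [← integrable_norm_rpow_iff hcont.aestronglyMeasurable hp₀ hp]
  refine (hN.integrable_exp (p.toReal * ε)
    (mul_pos (ENNReal.toReal_pos hp₀ hp) hε)).congr (.of_forall fun x => ?_)
  beta_reduce
  rw [norm_dampedChar hχ, ← exp_mul]
  ring_nf

variable [Fact (1 ≤ p)] [NeZero μ] [μ.IsAddRightInvariant]

theorem exists_approx_eigenvector_translation (hχc : Continuous χ) (hχ : ∀ g, ‖χ g‖ = 1)
    (hN : IsSubexponentialLength μ N) (hp : p ≠ ⊤) (hε : 0 < ε) :
    ∃ v : Lp ℂ p μ, ‖v‖ = 1 ∧ ∀ g, ‖translation μ p g v - χ g • v‖ ≤ exp (ε * N g) - 1 := by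
  have hp₀ : p ≠ 0 := (zero_lt_one.trans_le Fact.out).ne'
  have hmem : MemLp (dampedChar χ N ε) p μ := memLp_dampedChar hχc hχ hN hp₀ hp hε
  set u : Lp ℂ p μ := hmem.toLp
  have hu : u =ᵐ[μ] dampedChar χ N ε := hmem.coeFn_toLp
  have hu₀ : u ≠ 0 := fun h => by
    obtain ⟨x, hx, hx'⟩ := (hu.symm.and (h ▸ Lp.coeFn_zero ℂ p μ)).exists
    have hzero : dampedChar χ N ε x = 0 := hx.trans hx'
    exact (exp_pos (-ε * N x)).ne' (by rw [← norm_dampedChar hχ, hzero, norm_zero])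
  have hle : ∀ g, ‖translation μ p g u - χ g • u‖ ≤ (exp (ε * N g) - 1) * ‖u‖ := fun g => by
    refine Lp.norm_le_mul_norm_of_ae_le_mul ?_
    filter_upwards [Lp.coeFn_sub (translation μ p g u) (χ g • u), coeFn_translation g u,
      Lp.coeFn_smul (χ g) u, hu,
      (measurePreserving_sub_right μ g).quasiMeasurePreserving.ae_eq_comp hu]
      with x hsub htrans hsmul hux hug
    rw [hsub, Pi.sub_apply, htrans, hsmul, Pi.smul_apply, hux, smul_eq_mul]
    simp only [Function.comp_apply] at hug
    rw [hug]
    exact norm_dampedChar_sub_le hχ (hN.abs_sub_le x g) hε.le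
  have hnorm : 0 < ‖u‖ := norm_pos_iff.2 hu₀
  refine ⟨((‖u‖⁻¹ : ℝ) : ℂ) • u, by simp [norm_smul, hu₀], fun g => ?_⟩
  rw [map_smul, smul_comm, ← smul_sub, norm_smul, Complex.norm_real, norm_inv, norm_norm,
    inv_mul_le_iff₀ hnorm, mul_comm]
  exact hle g

end DampedChar

/-! ### Convolution operators -/

section Convolution

variable {G : Type*} [AddCommGroup G] [TopologicalSpace G] [IsTopologicalAddGroup G]
  [LocallyCompactSpace G] [MeasurableSpace G] [BorelSpace G]

theorem isContractiveRep_translation (μ : Measure G) [IsLocallyFiniteMeasure μ]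
    [μ.InnerRegularCompactLTTop] [μ.IsAddRightInvariant] {p : ENNReal} [Fact (1 ≤ p)]
    (hp : p ≠ ⊤) : IsContractiveRep (translation μ p) where
  norm_le_one g := ContinuousLinearMap.opNorm_le_bound _ zero_le_one fun f => by
    rw [norm_translation_apply, one_mul]
  continuous_apply := continuous_translation_apply hp

variable [SecondCountableTopology G]

/-- Convolution with an `L¹` function, as a bounded operator on `Lᵖ` for `1 ≤ p < ∞`. -/
noncomputable def convolutionOperator (μ : Measure G) [IsLocallyFiniteMeasure μ]
    [μ.InnerRegularCompactLTTop] [μ.IsAddRightInvariant] {p : ENNReal} [Fact (1 ≤ p)]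
    (hp : p ≠ ⊤) : Lp ℂ 1 μ →L[ℂ] Lp ℂ p μ →L[ℂ] Lp ℂ p μ :=
  (isContractiveRep_translation μ hp).integratedForm μ

theorem integral_mul_addChar_mem_spectrum_convolutionOperator {μ : Measure G}
    [IsLocallyFiniteMeasure μ] [μ.InnerRegularCompactLTTop] [μ.IsAddRightInvariant] [NeZero μ]
    {N : G → ℝ} (hN : IsSubexponentialLength μ N) {p : ENNReal} [Fact (1 ≤ p)] (hp : p ≠ ⊤)
    (f : Lp ℂ 1 μ) {χ : AddChar G ℂ} (hχc : Continuous χ) (hχ : ∀ g, ‖χ g‖ = 1) :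
    ∫ g, f g * χ g ∂μ ∈ spectrum ℂ (convolutionOperator μ hp f) := by
  choose v hv hle using fun n : ℕ =>
    exists_approx_eigenvector_translation hχc hχ hN hp (Nat.one_div_pos_of_nat (α := ℝ) (n := n))
  refine (isContractiveRep_translation μ hp).integral_mul_mem_spectrum_integratedForm f
    hχc.aestronglyMeasurable (fun g => (hχ g).le) hv fun g => ?_
  refine squeeze_zero_norm (hle · g) ?_
  have hcont : Continuous fun ε => exp (ε * N g) - 1 := by fun_prop
  simpa [Function.comp_def] using
    (hcont.tendsto 0).comp (tendsto_one_div_add_atTop_nhds_zero_nat (𝕜 := ℝ))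

end Convolution

/-! ### Integral operators on `L²` -/

section IntegralOperator

variable {X : Type*} [MeasurableSpace X]

/-- `K` is the absolutely convergent integral operator with kernel `κ`: for every `f`, almost
every slice `κ x · f` is integrable, with integral `K f x`. -/
def IsIntegralOperator (μ : Measure X) (κ : X → X → ℂ) (K : Lp ℂ 2 μ →L[ℂ] Lp ℂ 2 μ) : Prop :=
  ∀ f : Lp ℂ 2 μ, ∀ᵐ x ∂μ,
    Integrable (fun y => κ x y * f y) μ ∧ K f x = ∫ y, κ x y * f y ∂μ

variable {μ : Measure X} {κ κ' : X → X → ℂ} {K K' : Lp ℂ 2 μ →L[ℂ] Lp ℂ 2 μ}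

theorem IsIntegralOperator.unique (hK : IsIntegralOperator μ κ K)
    (hK' : IsIntegralOperator μ κ K') : K = K' := by
  ext1 f
  apply Lp.ext
  filter_upwards [hK f, hK' f] with x hx hx'
  rw [hx.2, hx'.2]

theorem IsIntegralOperator.congr_kernel (hK : IsIntegralOperator μ κ K)
    (h : ∀ᵐ x ∂μ, κ x =ᵐ[μ] κ' x) : IsIntegralOperator μ κ' K := by
  intro f
  filter_upwards [hK f, h] with x hx hκ
  have heq : (fun y => κ x y * f y) =ᵐ[μ] fun y => κ' x y * f y := hκ.mul .rfl
  exact ⟨hx.1.congr heq, hx.2.trans (integral_congr_ae heq)⟩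

end IntegralOperator

section ConvolutionKernel

variable {G : Type*} [AddCommGroup G] [TopologicalSpace G] [IsTopologicalAddGroup G]
  [MeasurableSpace G] [BorelSpace G] {μ : Measure G} [μ.IsAddRightInvariant]

theorem setLIntegral_enorm_comp_sub_le {p : ENNReal} (hp : 1 ≤ p) {u : G → ℂ}
    (hu : AEStronglyMeasurable u μ) (s : Set G) (g : G) :
    ∫⁻ x in s, ‖u (x - g)‖ₑ ∂μ ≤ eLpNorm u p μ * μ s ^ (1 - 1 / p.toReal) := by
  have hmp := measurePreserving_sub_right μ g
  calc ∫⁻ x in s, ‖u (x - g)‖ₑ ∂μ = eLpNorm (u ∘ (· - g)) 1 (μ.restrict s) :=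
        eLpNorm_one_eq_lintegral_enorm.symm
    _ ≤ eLpNorm (u ∘ (· - g)) p (μ.restrict s) * μ s ^ (1 - 1 / p.toReal) := by
        simpa using eLpNorm_le_eLpNorm_mul_rpow_measure_univ hp
          (hu.comp_measurePreserving hmp).restrict
    _ ≤ eLpNorm u p μ * μ s ^ (1 - 1 / p.toReal) := by
        gcongr
        exact (eLpNorm_mono_measure _ Measure.restrict_le_self).trans_eq
          (eLpNorm_comp_measurePreserving hu hmp)

variable [SecondCountableTopology G]

theorem integrable_mul_comp_sub_prod_restrict [SFinite μ] {p : ENNReal} [hp : Fact (1 ≤ p)]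
    (f : Lp ℂ 1 μ) (u : Lp ℂ p μ) {s : Set G} (hs : μ s ≠ ⊤) :
    Integrable (fun z : G × G => f z.1 * u (z.2 - z.1)) (μ.prod (μ.restrict s)) := by
  have hf : Measurable f := (Lp.stronglyMeasurable f).measurable
  have hu : Measurable u := (Lp.stronglyMeasurable u).measurable
  have hmeas : Measurable fun z : G × G => f z.1 * u (z.2 - z.1) := by fun_prop
  have hexp : 0 ≤ 1 - 1 / p.toReal := by
    by_cases htop : p = ⊤
    · simp [htop]
    · have : 1 ≤ p.toReal := by simpa using ENNReal.toReal_mono htop hp.out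
      rw [sub_nonneg, div_le_one (by positivity)]
      exact this
  refine ⟨hmeas.aestronglyMeasurable, ?_⟩
  rw [hasFiniteIntegral_iff_enorm, lintegral_prod _ hmeas.enorm.aemeasurable]
  calc ∫⁻ g, ∫⁻ x in s, ‖f g * u (x - g)‖ₑ ∂μ ∂μ
      ≤ ∫⁻ g, ‖f g‖ₑ * (eLpNorm u p μ * μ s ^ (1 - 1 / p.toReal)) ∂μ := by
        gcongr with g
        simp only [enorm_mul]
        rw [lintegral_const_mul _ (by fun_prop)]
        gcongr
        exact setLIntegral_enorm_comp_sub_le hp.out hu.aestronglyMeasurable s g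
    _ = (∫⁻ g, ‖f g‖ₑ ∂μ) * (eLpNorm u p μ * μ s ^ (1 - 1 / p.toReal)) :=
        lintegral_mul_const _ hf.enorm
    _ < ⊤ := ENNReal.mul_lt_top (L1.integrable_coeFn f).2
        (ENNReal.mul_lt_top (Lp.memLp u).2 (ENNReal.rpow_lt_top_of_nonneg hexp hs))

variable [LocallyCompactSpace G] [IsLocallyFiniteMeasure μ] [μ.InnerRegularCompactLTTop]

theorem setIntegral_convolutionOperator [SFinite μ] (f : Lp ℂ 1 μ) (u : Lp ℂ 2 μ) {s : Set G}
    (hs : MeasurableSet s) (hμs : μ s ≠ ⊤) :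
    ∫ x in s, convolutionOperator μ ENNReal.ofNat_ne_top f u x ∂μ =
      ∫ x in s, ∫ g, f g * u (x - g) ∂μ ∂μ := by
  have hT := isContractiveRep_translation μ (ENNReal.ofNat_ne_top (n := 2))
  rw [← integral_integral_swap (integrable_mul_comp_sub_prod_restrict f u hμs),
    ← L2.inner_indicatorConstLp_one (𝕜 := ℂ) hs hμs]
  refine ((innerSL ℂ (indicatorConstLp 2 hs hμs (1 : ℂ))).integral_comp_comm
    (hT.integrable_smul_apply (L1.integrable_coeFn f) u)).symm.trans ?_
  congr 1 with g
  rw [map_smul, smul_eq_mul, integral_const_mul, innerSL_apply_apply,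
    L2.inner_indicatorConstLp_one (𝕜 := ℂ) hs hμs]
  congr 1
  exact integral_congr_ae (ae_restrict_of_ae (coeFn_translation g u))

theorem convolutionOperator_ae [SigmaFinite μ] (f : Lp ℂ 1 μ) (u : Lp ℂ 2 μ) :
    ∀ᵐ x ∂μ, Integrable (fun g => f g * u (x - g)) μ ∧
      convolutionOperator μ ENNReal.ofNat_ne_top f u x = ∫ g, f g * u (x - g) ∂μ := by
  refine Filter.Eventually.and ?_ ?_
  · exact ae_of_forall_measure_lt_top_ae_restrict _ fun s _ hμs =>
      (integrable_mul_comp_sub_prod_restrict f u hμs.ne).prod_left_ae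
  · exact ae_eq_of_forall_setIntegral_eq_of_sigmaFinite
      (fun s _ hμs => integrableOn_Lp_of_measure_ne_top _ (by norm_num) hμs.ne)
      (fun s _ hμs => (integrable_mul_comp_sub_prod_restrict f u hμs.ne).integral_prod_right)
      (fun s hs hμs => setIntegral_convolutionOperator f u hs hμs.ne)

theorem isIntegralOperator_convolutionOperator [SigmaFinite μ] [μ.IsAddLeftInvariant]
    [μ.IsNegInvariant] {k : G → ℂ} (hk : Integrable k μ) :
    IsIntegralOperator μ (fun x y => k (x - y))
      (convolutionOperator μ ENNReal.ofNat_ne_top (hk.toL1 k)) := by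
  have hLp : IsIntegralOperator μ (fun x y => hk.toL1 k (x - y))
      (convolutionOperator μ ENNReal.ofNat_ne_top (hk.toL1 k)) := by
    intro u
    filter_upwards [convolutionOperator_ae (hk.toL1 k) u] with x ⟨hint, heq⟩
    have hflip : (fun y => hk.toL1 k (x - y) * u y) =
        fun y => (fun g => hk.toL1 k g * u (x - g)) (x - y) := by
      simp only [sub_sub_cancel]
    rw [hflip, integral_sub_left_eq_self (fun g => hk.toL1 k g * u (x - g)) μ x]
    exact ⟨hint.comp_sub_left x, heq⟩
  refine hLp.congr_kernel (.of_forall fun x => ?_)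
  exact (Measure.measurePreserving_sub_left μ x).quasiMeasurePreserving.ae_eq_comp hk.coeFn_toL1

end ConvolutionKernel

/-! ### Weighted changes of variables -/

section WeightedChange

variable {X Y : Type*} [MeasurableSpace X] [MeasurableSpace Y]

/-- The change of variables `Φ`, with left inverse `Ψ` and Jacobian `w ^ 2`; it makes
`f ↦ w * f ∘ Φ` a unitary operator from `L²(μ)` onto `L²(m)`. -/
structure IsWeightedChange (Φ : Y → X) (Ψ : X → Y) (w : Y → ℝ) (m : Measure Y) (μ : Measure X) :
    Prop where
  measurePreserving : MeasurePreserving Φ (m.withDensity fun y => ENNReal.ofReal (w y ^ 2)) μ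
  leftInverse : Function.LeftInverse Ψ Φ
  measurable_inv : Measurable Ψ
  measurable_weight : Measurable w
  weight_pos : ∀ y, 0 < w y

namespace IsWeightedChange

variable {m : Measure Y} {μ : Measure X} {Φ : Y → X} {Ψ : X → Y} {w : Y → ℝ}

theorem ofReal_weight_ne_zero (h : IsWeightedChange Φ Ψ w m μ) (y : Y) : (w y : ℂ) ≠ 0 :=
  Complex.ofReal_ne_zero.2 (h.weight_pos y).ne'

theorem eLpNorm_weight_mul_comp (h : IsWeightedChange Φ Ψ w m μ) {f : X → ℂ} (hf : Measurable f) :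
    eLpNorm (fun y => (w y : ℂ) * f (Φ y)) 2 m = eLpNorm f 2 μ := by
  have hw := h.measurable_weight
  have hΦ := h.measurePreserving.measurable
  rw [eLpNorm_eq_lintegral_rpow_enorm_toReal (by simp) (by simp),
    eLpNorm_eq_lintegral_rpow_enorm_toReal (by simp) (by simp),
    ← h.measurePreserving.lintegral_comp (f := fun x => ‖f x‖ₑ ^ (2 : ENNReal).toReal)
      (by fun_prop),
    lintegral_withDensity_eq_lintegral_mul _ (by fun_prop) (by fun_prop)]
  congr 2 with y
  rw [enorm_mul, ENNReal.mul_rpow_of_nonneg _ _ (by simp), Pi.mul_apply, ← ofReal_norm (w y : ℂ),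
    Complex.norm_real, norm_of_nonneg (h.weight_pos y).le,
    ENNReal.ofReal_rpow_of_pos (h.weight_pos y)]
  simp

theorem memLp_weight_mul_comp_iff (h : IsWeightedChange Φ Ψ w m μ) {f : X → ℂ}
    (hf : Measurable f) : MemLp (fun y => (w y : ℂ) * f (Φ y)) 2 m ↔ MemLp f 2 μ := by
  have hw := h.measurable_weight
  have hΦ := h.measurePreserving.measurable
  have hcomp : Measurable fun y => (w y : ℂ) * f (Φ y) := by fun_prop
  simp only [MemLp, hcomp.aestronglyMeasurable, hf.aestronglyMeasurable, true_and,
    h.eLpNorm_weight_mul_comp hf]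

theorem memLp_weight_mul_comp (h : IsWeightedChange Φ Ψ w m μ) (f : Lp ℂ 2 μ) :
    MemLp (fun y => (w y : ℂ) * f (Φ y)) 2 m :=
  (h.memLp_weight_mul_comp_iff (Lp.stronglyMeasurable f).measurable).2 (Lp.memLp f)

variable [MeasurableEq X]

theorem measurableEmbedding (h : IsWeightedChange Φ Ψ w m μ) : MeasurableEmbedding Φ := by
  refine .of_measurable_inverse h.measurePreserving.measurable ?_ h.measurable_inv h.leftInverse
  have hrange : range Φ = {x | Φ (Ψ x) = x} := by
    ext x
    exact ⟨by rintro ⟨y, rfl⟩; exact congrArg Φ (h.leftInverse y), fun hx => ⟨Ψ x, hx⟩⟩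
  rw [hrange]
  exact measurableSet_eq_fun (h.measurePreserving.measurable.comp h.measurable_inv) measurable_id

theorem ae_iff (h : IsWeightedChange Φ Ψ w m μ) {P : X → Prop} :
    (∀ᵐ x ∂μ, P x) ↔ ∀ᵐ y ∂m, P (Φ y) := by
  have hw := h.measurable_weight
  rw [← h.measurePreserving.map_eq, h.measurableEmbedding.ae_map_iff,
    ae_withDensity_iff (by fun_prop)]
  simp [(h.weight_pos _).ne']

theorem integrable_iff (h : IsWeightedChange Φ Ψ w m μ) {f : X → ℂ} :
    Integrable f μ ↔ Integrable (fun y => (w y : ℂ) ^ 2 * f (Φ y)) m := by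
  have hw := h.measurable_weight
  rw [← h.measurePreserving.integrable_comp_emb h.measurableEmbedding,
    integrable_withDensity_iff_integrable_smul' (by fun_prop) (by simp)]
  simp [ENNReal.toReal_ofReal, sq_nonneg, Complex.real_smul]

theorem integral_eq (h : IsWeightedChange Φ Ψ w m μ) (f : X → ℂ) :
    ∫ x, f x ∂μ = ∫ y, (w y : ℂ) ^ 2 * f (Φ y) ∂m := by
  have hw := h.measurable_weight
  rw [← h.measurePreserving.integral_comp h.measurableEmbedding,
    integral_withDensity_eq_integral_toReal_smul (by fun_prop) (by simp)]
  simp [ENNReal.toReal_ofReal, sq_nonneg, Complex.real_smul]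

/-- The isometry `f ↦ w * f ∘ Φ` from `L²(μ)` to `L²(m)`. -/
noncomputable def weightedCompIsometry (h : IsWeightedChange Φ Ψ w m μ) :
    Lp ℂ 2 μ →ₗᵢ[ℂ] Lp ℂ 2 m where
  toFun f := (h.memLp_weight_mul_comp f).toLp
  map_add' f g := by
    apply Lp.ext
    filter_upwards [(h.memLp_weight_mul_comp (f + g)).coeFn_toLp,
      (h.memLp_weight_mul_comp f).coeFn_toLp, (h.memLp_weight_mul_comp g).coeFn_toLp,
      Lp.coeFn_add (h.memLp_weight_mul_comp f).toLp (h.memLp_weight_mul_comp g).toLp,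
      h.ae_iff.1 (Lp.coeFn_add f g)] with y hfg hf hg hadd hadd'
    rw [hfg, hadd, Pi.add_apply, hf, hg, hadd', Pi.add_apply, mul_add]
  map_smul' c f := by
    apply Lp.ext
    filter_upwards [(h.memLp_weight_mul_comp (c • f)).coeFn_toLp,
      (h.memLp_weight_mul_comp f).coeFn_toLp,
      Lp.coeFn_smul c (h.memLp_weight_mul_comp f).toLp,
      h.ae_iff.1 (Lp.coeFn_smul c f)] with y hcf hf hsmul hsmul'
    rw [hcf, RingHom.id_apply, hsmul, Pi.smul_apply, hf, hsmul', Pi.smul_apply, smul_eq_mul,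
      smul_eq_mul, mul_left_comm]
  norm_map' f := by
    rw [LinearMap.coe_mk, AddHom.coe_mk, Lp.norm_toLp,
      h.eLpNorm_weight_mul_comp (Lp.stronglyMeasurable f).measurable, Lp.norm_def]

theorem coeFn_weightedCompIsometry (h : IsWeightedChange Φ Ψ w m μ) (f : Lp ℂ 2 μ) :
    h.weightedCompIsometry f =ᵐ[m] fun y => (w y : ℂ) * f (Φ y) :=
  (h.memLp_weight_mul_comp f).coeFn_toLp

theorem surjective_weightedCompIsometry (h : IsWeightedChange Φ Ψ w m μ) :
    Function.Surjective h.weightedCompIsometry := by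
  intro F
  have hF : Measurable F := (Lp.stronglyMeasurable F).measurable
  have hw := h.measurable_weight
  have hΨ := h.measurable_inv
  have hcomp : (fun y => (w y : ℂ) * (F (Ψ (Φ y)) / w (Ψ (Φ y)))) = F := by
    ext y
    rw [h.leftInverse, mul_div_cancel₀ _ (h.ofReal_weight_ne_zero y)]
  have hmem : MemLp (fun x => F (Ψ x) / w (Ψ x)) 2 μ := by
    rw [← h.memLp_weight_mul_comp_iff (by fun_prop), hcomp]
    exact Lp.memLp F
  refine ⟨hmem.toLp, Lp.ext ?_⟩
  filter_upwards [h.coeFn_weightedCompIsometry hmem.toLp, h.ae_iff.1 hmem.coeFn_toLp] with y hy hy'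
  rw [hy, hy', ← congrFun hcomp y]

/-- The unitary operator `f ↦ w * f ∘ Φ` from `L²(μ)` onto `L²(m)`. -/
noncomputable def weightedComp (h : IsWeightedChange Φ Ψ w m μ) : Lp ℂ 2 μ ≃ₗᵢ[ℂ] Lp ℂ 2 m :=
  .ofSurjective h.weightedCompIsometry h.surjective_weightedCompIsometry

theorem coeFn_weightedComp (h : IsWeightedChange Φ Ψ w m μ) (f : Lp ℂ 2 μ) :
    h.weightedComp f =ᵐ[m] fun y => (w y : ℂ) * f (Φ y) :=
  h.coeFn_weightedCompIsometry f

/-- The operator on `L²(μ)` that the change of variables carries to `K` on `L²(m)`. -/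
noncomputable def pullback (h : IsWeightedChange Φ Ψ w m μ) :
    (Lp ℂ 2 m →L[ℂ] Lp ℂ 2 m) ≃ₐ[ℂ] (Lp ℂ 2 μ →L[ℂ] Lp ℂ 2 μ) :=
  h.weightedComp.symm.toContinuousLinearEquiv.conjContinuousAlgEquiv.toAlgEquiv

theorem weightedComp_pullback (h : IsWeightedChange Φ Ψ w m μ) (K : Lp ℂ 2 m →L[ℂ] Lp ℂ 2 m)
    (f : Lp ℂ 2 μ) : h.weightedComp (h.pullback K f) = K (h.weightedComp f) :=
  h.weightedComp.apply_symm_apply _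

theorem isIntegralOperator_pullback (h : IsWeightedChange Φ Ψ w m μ) {κ : X → X → ℂ}
    {K : Lp ℂ 2 m →L[ℂ] Lp ℂ 2 m}
    (hK : IsIntegralOperator m (fun y z => w y * κ (Φ y) (Φ z) * w z) K) :
    IsIntegralOperator μ κ (h.pullback K) := by
  intro f
  rw [h.ae_iff]
  filter_upwards [hK (h.weightedComp f), h.coeFn_weightedComp (h.pullback K f)]
    with y ⟨hint, heq⟩ hy
  have hslice : (fun z => w y * κ (Φ y) (Φ z) * w z * h.weightedComp f z) =ᵐ[m]
      fun z => w y * ((w z : ℂ) ^ 2 * (κ (Φ y) (Φ z) * f (Φ z))) := by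
    filter_upwards [h.coeFn_weightedComp f] with z hz
    rw [hz]
    ring
  constructor
  · rw [h.integrable_iff]
    exact (integrable_const_mul_iff (h.ofReal_weight_ne_zero y).isUnit _).1 (hint.congr hslice)
  · apply mul_left_cancel₀ (h.ofReal_weight_ne_zero y)
    rw [h.integral_eq, ← integral_const_mul, ← integral_congr_ae hslice, ← heq, ← hy,
      h.weightedComp_pullback]

end IsWeightedChange

end WeightedChange

/-! ### Characters of the line and of the cylinder -/

section Characters

/-- Averaging the functional equation over `[0, a]`, where `∫₀ᵃ χ ≠ 0`, writes `χ` as a difference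
of two primitives of `χ`. -/
theorem exists_hasDerivAt_addChar {χ : AddChar ℝ ℂ} (hχ : Continuous χ) :
    ∃ c : ℂ, ∀ x, HasDerivAt χ (c * χ x) x := by
  set primitive : ℝ → ℂ := fun x => ∫ t in (0 : ℝ)..x, χ t
  have hprimitive (x : ℝ) : HasDerivAt primitive (χ x) x :=
    intervalIntegral.integral_hasDerivAt_right (hχ.intervalIntegrable _ _)
      (hχ.stronglyMeasurableAtFilter _ _) hχ.continuousAt
  obtain ⟨a, ha⟩ : ∃ a, primitive a ≠ 0 := by
    by_contra! hzero
    have h0 := hprimitive 0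
    rw [funext hzero, χ.map_zero_eq_one] at h0
    exact one_ne_zero (h0.unique (hasDerivAt_const 0 0))
  have hχ_eq (x : ℝ) : χ x = (primitive (x + a) - primitive x) / primitive a := by
    have hshift := intervalIntegral.integral_comp_add_left (a := 0) (b := a) χ x
    rw [add_zero] at hshift
    rw [eq_div_iff ha, intervalIntegral.integral_interval_sub_left (hχ.intervalIntegrable _ _)
      (hχ.intervalIntegrable _ _), ← hshift, ← intervalIntegral.integral_const_mul]
    simp only [χ.map_add_eq_mul]
  refine ⟨(χ a - 1) / primitive a, fun x => ?_⟩
  have hderiv := (((hprimitive (x + a)).comp_add_const x a).sub (hprimitive x)).div_const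
    (primitive a)
  refine (hderiv.congr_of_eventuallyEq (.of_forall hχ_eq)).congr_deriv ?_
  rw [χ.map_add_eq_mul]
  ring

theorem exists_addChar_eq_cexp {χ : AddChar ℝ ℂ} (hχ : Continuous χ) :
    ∃ c : ℂ, ∀ x : ℝ, χ x = Complex.exp (c * x) := by
  obtain ⟨c, hc⟩ := exists_hasDerivAt_addChar hχ
  have hquot (x : ℝ) : HasDerivAt (fun x : ℝ => χ x * Complex.exp (-(c * x))) 0 x := by
    refine ((hc x).mul ((Complex.ofRealCLM.hasDerivAt.const_mul c).neg.cexp)).congr_deriv ?_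
    simp only [Complex.ofRealCLM_apply, Complex.ofReal_one]
    ring
  refine ⟨c, fun x => ?_⟩
  have hconst := is_const_of_deriv_eq_zero (fun x => (hquot x).differentiableAt)
    (fun x => (hquot x).deriv) x 0
  simp only [χ.map_zero_eq_one, Complex.ofReal_zero, mul_zero, neg_zero, Complex.exp_zero, mul_one,
    Complex.exp_neg, mul_inv_eq_one₀ (Complex.exp_ne_zero _)] at hconst
  exact hconst

theorem exists_addChar_eq_cexp_I_mul {χ : AddChar ℝ ℂ} (hχ : Continuous χ)
    (hχ_le : ∀ x, ‖χ x‖ ≤ 1) : ∃ ξ : ℝ, ∀ x : ℝ, χ x = Complex.exp (Complex.I * ξ * x) := by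
  obtain ⟨c, hc⟩ := exists_addChar_eq_cexp hχ
  have hre : c.re = 0 := by
    have hpos := hχ_le 1
    have hneg := hχ_le (-1)
    simp only [hc, Complex.norm_exp, exp_le_one_iff, Complex.re_mul_ofReal, mul_one, mul_neg,
      neg_nonpos] at hpos hneg
    exact le_antisymm hpos hneg
  refine ⟨c.im, fun x => ?_⟩
  rw [hc, mul_comm Complex.I, show (c.im : ℂ) * Complex.I = c by apply Complex.ext <;> simp [hre]]

instance fact_two_pi_pos : Fact (0 < 2 * π) := ⟨two_pi_pos⟩

theorem fourier_two_pi_coe_apply (n : ℤ) (θ : ℝ) :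
    fourier n (θ : AddCircle (2 * π)) = Complex.exp (Complex.I * n * θ) := by
  rw [fourier_coe_apply]
  congr 1
  push_cast
  field_simp

theorem exists_addChar_circle_eq_fourier {χ : AddChar (AddCircle (2 * π)) ℂ} (hχ : Continuous χ)
    (hχ_le : ∀ x, ‖χ x‖ ≤ 1) : ∃ n : ℤ, ∀ x, χ x = fourier n x := by
  set ψ : AddChar ℝ ℂ := χ.compAddMonoidHom (QuotientAddGroup.mk' _)
  obtain ⟨η, hη⟩ := exists_addChar_eq_cexp_I_mul (χ := ψ)
    (hχ.comp (AddCircle.continuous_mk' _)) (fun x => hχ_le _)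
  have hperiod : Complex.exp (Complex.I * η * (2 * π : ℝ)) = 1 := by
    rw [← hη]
    exact (congrArg χ (AddCircle.coe_period _)).trans χ.map_zero_eq_one
  obtain ⟨n, hn⟩ := Complex.exp_eq_one_iff.1 hperiod
  have hηn : (η : ℂ) = n := by
    apply mul_right_cancel₀ Complex.two_pi_I_ne_zero
    rw [← hn]
    push_cast
    ring
  refine ⟨n, fun x => ?_⟩
  induction x using QuotientAddGroup.induction_on with
  | H θ => exact (hη θ).trans (by rw [hηn]; exact (fourier_two_pi_coe_apply n θ).symm)

/-- The cylinder `ℝ × ℝ/2πℤ`, on which the cone is parametrized by `(log t, θ)`. -/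
abbrev Cylinder : Type := ℝ × AddCircle (2 * π)

instance isAddHaarMeasure_volume_cylinder : (volume : Measure Cylinder).IsAddHaarMeasure :=
  Measure.prod.instIsAddHaarMeasure _ _

/-- The unitary character `(x, θ) ↦ exp (i ξ x) * exp (-i n θ)` of the cylinder; integrating
against it is a Mellin transform in `t = exp x` and a Fourier coefficient in `θ`. -/
noncomputable def mellinChar (n : ℤ) (ξ : ℝ) : AddChar Cylinder ℂ where
  toFun g := Complex.exp (Complex.I * ξ * g.1) * fourier (-n) g.2
  map_zero_eq_one' := by simp
  map_add_eq_mul' g h := by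
    simp only [Prod.fst_add, Prod.snd_add, fourier_apply, smul_add, AddCircle.toCircle_add,
      Circle.coe_mul, Complex.ofReal_add, mul_add, Complex.exp_add]
    ring

theorem mellinChar_apply (n : ℤ) (ξ : ℝ) (g : Cylinder) :
    mellinChar n ξ g = Complex.exp (Complex.I * ξ * g.1) * fourier (-n) g.2 :=
  rfl

theorem continuous_mellinChar (n : ℤ) (ξ : ℝ) : Continuous (mellinChar n ξ) := by
  change Continuous fun g : Cylinder => Complex.exp (Complex.I * ξ * g.1) * fourier (-n) g.2
  fun_prop

theorem norm_mellinChar (n : ℤ) (ξ : ℝ) (g : Cylinder) : ‖mellinChar n ξ g‖ = 1 := by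
  rw [mellinChar_apply, norm_mul, Complex.norm_exp, fourier_apply, Circle.norm_coe]
  simp

theorem exists_addChar_eq_mellinChar {χ : AddChar Cylinder ℂ} (hχ : Continuous χ)
    (hχ_le : ∀ g, ‖χ g‖ ≤ 1) : ∃ n ξ, χ = mellinChar n ξ := by
  obtain ⟨ξ, hξ⟩ := exists_addChar_eq_cexp_I_mul (χ := χ.compAddMonoidHom (.inl ℝ _))
    (hχ.comp (continuous_id.prodMk continuous_const)) (fun x => hχ_le _)
  obtain ⟨n, hn⟩ := exists_addChar_circle_eq_fourier (χ := χ.compAddMonoidHom (.inr ℝ _))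
    (hχ.comp (continuous_const.prodMk continuous_id)) (fun x => hχ_le _)
  refine ⟨-n, ξ, DFunLike.ext _ _ fun g => ?_⟩
  rw [mellinChar_apply, neg_neg, ← hξ, ← hn]
  change χ g = χ (g.1, 0) * χ (0, g.2)
  rw [← χ.map_add_eq_mul, Prod.mk_add_mk, add_zero, zero_add]

theorem isSubexponentialLength_abs : IsSubexponentialLength (volume : Measure ℝ) abs where
  continuous := continuous_abs
  abs_sub_le x g := by simpa [abs_neg] using abs_abs_sub_abs_le_abs_sub (x - g) x
  integrable_exp ε hε := by
    rw [← integrableOn_univ, ← Iic_union_Ioi (a := (0 : ℝ))]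
    refine .union ?_ ?_
    · refine (integrableOn_exp_mul_Iic hε 0).congr_fun (fun x hx => ?_) measurableSet_Iic
      simp only [abs_of_nonpos (mem_Iic.1 hx), neg_mul_neg]
    · refine (integrableOn_exp_mul_Ioi (neg_lt_zero.2 hε) 0).congr_fun (fun x hx => ?_)
        measurableSet_Ioi
      simp only [abs_of_pos (mem_Ioi.1 hx)]

theorem IsSubexponentialLength.comp_fst {G H : Type*} [AddCommGroup G] [TopologicalSpace G]
    [MeasurableSpace G] [AddCommGroup H] [TopologicalSpace H] [MeasurableSpace H]
    {μ : Measure G} {ν : Measure H} [IsFiniteMeasure ν] {N : G → ℝ}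
    (hN : IsSubexponentialLength μ N) :
    IsSubexponentialLength (μ.prod ν) fun g : G × H => N g.1 where
  continuous := hN.continuous.comp continuous_fst
  abs_sub_le x g := hN.abs_sub_le x.1 g.1
  integrable_exp ε hε := (hN.integrable_exp ε hε).comp_fst ν

end Characters

/-! ### Second differences -/

section SecondDifference

theorem norm_second_difference_le {E : Type*} [NormedAddCommGroup E] [NormedSpace ℝ E]
    {f f' f'' : ℝ → E} {x h M : ℝ} (hh : 0 ≤ h)
    (hf : ∀ y ∈ Icc (x - h) (x + h), HasDerivAt f (f' y) y)
    (hf' : ∀ y ∈ Icc (x - h) (x + h), HasDerivAt f' (f'' y) y)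
    (hM : ∀ y ∈ Icc (x - h) (x + h), ‖f'' y‖ ≤ M) :
    ‖2 • f x - f (x + h) - f (x - h)‖ ≤ 2 * M * h ^ 2 := by
  have hM0 : 0 ≤ M := (norm_nonneg _).trans (hM x ⟨by linarith, by linarith⟩)
  have hadd {s : ℝ} (hs : s ∈ Icc 0 h) : x + s ∈ Icc (x - h) (x + h) :=
    ⟨by linarith [hs.1], by linarith [hs.2]⟩
  have hsub {s : ℝ} (hs : s ∈ Icc 0 h) : x - s ∈ Icc (x - h) (x + h) :=
    ⟨by linarith [hs.2], by linarith [hs.1]⟩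
  have hderiv (s) (hs : s ∈ Icc 0 h) : ‖f' (x + s) - f' (x - s)‖ ≤ 2 * M * h :=
    calc ‖f' (x + s) - f' (x - s)‖ ≤ M * ‖x + s - (x - s)‖ :=
          Convex.norm_image_sub_le_of_norm_hasDerivWithin_le
            (fun y hy => (hf' y hy).hasDerivWithinAt) hM (convex_Icc _ _) (hsub hs) (hadd hs)
      _ = 2 * M * s := by
          rw [show x + s - (x - s) = 2 * s by ring, norm_of_nonneg (by linarith [hs.1])]
          ring
      _ ≤ 2 * M * h := by gcongr; exact hs.2
  have hsymm (s) (hs : s ∈ Icc 0 h) :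
      HasDerivWithinAt (fun s => f (x + s) + f (x - s)) (f' (x + s) - f' (x - s)) (Icc 0 h) s := by
    have h₁ := (hf _ (hadd hs)).comp_const_add x s
    have h₂ := (hf _ (hsub hs)).comp_const_sub x s
    exact ((h₁.add h₂).congr_deriv (sub_eq_add_neg _ _).symm).hasDerivWithinAt
  have hmvt := Convex.norm_image_sub_le_of_norm_hasDerivWithin_le hsymm hderiv (convex_Icc _ _)
    ⟨le_rfl, hh⟩ ⟨hh, le_rfl⟩
  simp only [add_zero, sub_zero, norm_of_nonneg hh] at hmvt
  calc ‖2 • f x - f (x + h) - f (x - h)‖ = ‖f (x + h) + f (x - h) - (f x + f x)‖ := by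
        rw [← norm_neg, two_smul]
        congr 1
        abel
    _ ≤ 2 * M * h ^ 2 := hmvt.trans_eq (by ring)

end SecondDifference

/-! ### The profile of the kernel -/

section Profile

/-- The function `w ↦ w / (A + B w) ^ (3 / 2)`. With `w = 1 - cos θ`, `A = (t - 1) ^ 2` and
`B = 2 t (sin α) ^ 2` it is the kernel of the cone up to a constant factor. -/
noncomputable def profile (A B w : ℝ) : ℝ :=
  w * (A + B * w) ^ (-(3 / 2) : ℝ)

variable {A B w : ℝ}

theorem profile_nonneg (hA : 0 ≤ A) (hB : 0 ≤ B) (hw : 0 ≤ w) : 0 ≤ profile A B w := by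
  unfold profile
  positivity

theorem measurable_profile :
    Measurable fun p : ℝ × ℝ × ℝ => profile p.1 p.2.1 p.2.2 := by
  unfold profile
  fun_prop

theorem hasDerivAt_affine_rpow (r : ℝ) (hq : 0 < A + B * w) :
    HasDerivAt (fun w => (A + B * w) ^ r) (r * B * (A + B * w) ^ (r - 1)) w :=
  ((((hasDerivAt_id w).const_mul B).const_add A).rpow_const (Or.inl hq.ne')).congr_deriv
    (by simp only [id]; ring)

theorem affine_rpow_eq_mul_rpow_sub_one (r : ℝ) (hq : 0 < A + B * w) :
    (A + B * w) ^ r = (A + B * w) * (A + B * w) ^ (r - 1) := by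
  rw [rpow_sub_one hq.ne', mul_div_cancel₀ _ hq.ne']

theorem hasDerivAt_profile (hq : 0 < A + B * w) :
    HasDerivAt (profile A B) ((A - B * w / 2) * (A + B * w) ^ (-(5 / 2) : ℝ)) w := by
  refine ((hasDerivAt_id w).mul (hasDerivAt_affine_rpow (-(3 / 2)) hq)).congr_deriv ?_
  rw [affine_rpow_eq_mul_rpow_sub_one (-(3 / 2)) hq, show (-(3 / 2) - 1 : ℝ) = -(5 / 2) by norm_num]
  simp only [id]
  ring

theorem hasDerivAt_profile_deriv (hq : 0 < A + B * w) :
    HasDerivAt (fun w => (A - B * w / 2) * (A + B * w) ^ (-(5 / 2) : ℝ))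
      (-(3 * B * (A - B * w / 4)) * (A + B * w) ^ (-(7 / 2) : ℝ)) w := by
  have hlin : HasDerivAt (fun w => A - B * w / 2) (-(B / 2)) w :=
    ((((hasDerivAt_id w).const_mul B).div_const 2).const_sub A).congr_deriv (by ring)
  refine (hlin.mul (hasDerivAt_affine_rpow (-(5 / 2)) hq)).congr_deriv ?_
  rw [affine_rpow_eq_mul_rpow_sub_one (-(5 / 2)) hq, show (-(5 / 2) - 1 : ℝ) = -(7 / 2) by norm_num]
  ring

theorem abs_profile_deriv_le (hA : 0 ≤ A) (hB : 0 ≤ B) (hw : 0 ≤ w) (hq : 0 < A + B * w) :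
    |(A - B * w / 2) * (A + B * w) ^ (-(5 / 2) : ℝ)| ≤ (A + B * w) ^ (-(3 / 2) : ℝ) := by
  have hBw : 0 ≤ B * w := mul_nonneg hB hw
  rw [affine_rpow_eq_mul_rpow_sub_one (-(3 / 2)) hq, show (-(3 / 2) - 1 : ℝ) = -(5 / 2) by norm_num,
    abs_mul, abs_of_nonneg (rpow_nonneg hq.le _)]
  gcongr
  exact abs_le.2 ⟨by linarith, by linarith⟩

theorem mul_abs_profile_deriv_two_le (hA : 0 ≤ A) (hB : 0 ≤ B) (hw : 0 ≤ w)
    (hq : 0 < A + B * w) :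
    w * |-(3 * B * (A - B * w / 4)) * (A + B * w) ^ (-(7 / 2) : ℝ)| ≤
      3 * (A + B * w) ^ (-(3 / 2) : ℝ) := by
  have hBw : 0 ≤ B * w := mul_nonneg hB hw
  have hlin : |A - B * w / 4| ≤ A + B * w := abs_le.2 ⟨by linarith, by linarith⟩
  rw [affine_rpow_eq_mul_rpow_sub_one (-(3 / 2)) hq, affine_rpow_eq_mul_rpow_sub_one (_ - 1) hq,
    show (-(3 / 2) - 1 - 1 : ℝ) = -(7 / 2) by norm_num, abs_mul, abs_neg, abs_mul,
    abs_of_nonneg (by positivity : 0 ≤ 3 * B), abs_of_nonneg (rpow_nonneg hq.le _)]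
  calc w * (3 * B * |A - B * w / 4| * (A + B * w) ^ (-(7 / 2) : ℝ))
      = 3 * ((B * w) * (|A - B * w / 4| * (A + B * w) ^ (-(7 / 2) : ℝ))) := by ring
    _ ≤ 3 * ((A + B * w) * ((A + B * w) * (A + B * w) ^ (-(7 / 2) : ℝ))) := by
        gcongr
        linarith

theorem abs_second_difference_profile_le {m x h : ℝ} (hA : 0 ≤ A) (hB : 0 ≤ B) (hh : 0 ≤ h)
    (hm : 0 < m) (hq : ∀ y ∈ Icc (x - h) (x + h), m ≤ A + B * (1 - cos y)) :
    |2 • profile A B (1 - cos x) - profile A B (1 - cos (x + h)) -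
      profile A B (1 - cos (x - h))| ≤ 14 * m ^ (-(3 / 2) : ℝ) * h ^ 2 := by
  have hw (y : ℝ) : HasDerivAt (fun y => 1 - cos y) (sin y) y :=
    ((hasDerivAt_cos y).const_sub 1).congr_deriv (neg_neg _)
  have hqpos (y) (hy : y ∈ Icc (x - h) (x + h)) : 0 < A + B * (1 - cos y) := hm.trans_le (hq y hy)
  rw [show 14 * m ^ (-(3 / 2) : ℝ) * h ^ 2 = 2 * (7 * m ^ (-(3 / 2) : ℝ)) * h ^ 2 by ring]
  refine norm_second_difference_le hh
    (fun y hy => (hasDerivAt_profile (hqpos y hy)).comp y (hw y))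
    (fun y hy => ((hasDerivAt_profile_deriv (hqpos y hy)).comp y (hw y)).mul (hasDerivAt_sin y))
    fun y hy => ?_
  have hw0 : 0 ≤ 1 - cos y := sub_nonneg.2 (cos_le_one y)
  have hsin : sin y * sin y ≤ 2 * (1 - cos y) := by
    nlinarith [sin_sq_add_cos_sq y, neg_one_le_cos y]
  have hmono : (A + B * (1 - cos y)) ^ (-(3 / 2) : ℝ) ≤ m ^ (-(3 / 2) : ℝ) :=
    rpow_le_rpow_of_nonpos hm (hq y hy) (by norm_num)
  have hd1 := abs_profile_deriv_le hA hB hw0 (hqpos y hy)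
  have hd2 := mul_abs_profile_deriv_two_le hA hB hw0 (hqpos y hy)
  simp only [Function.comp_apply, norm_eq_abs]
  set d1 := (A - B * (1 - cos y) / 2) * (A + B * (1 - cos y)) ^ (-(5 / 2) : ℝ)
  set d2 := -(3 * B * (A - B * (1 - cos y) / 4)) * (A + B * (1 - cos y)) ^ (-(7 / 2) : ℝ)
  calc |d2 * sin y * sin y + d1 * cos y| ≤ |d2| * (sin y * sin y) + |d1| * |cos y| := by
        refine (abs_add_le _ _).trans_eq ?_
        rw [mul_assoc, abs_mul, abs_mul d1, abs_mul_self (sin y)]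
    _ ≤ |d2| * (2 * (1 - cos y)) + |d1| * 1 := by gcongr; exact abs_cos_le_one y
    _ ≤ 7 * m ^ (-(3 / 2) : ℝ) := by linarith

theorem integral_one_add_sq_rpow_neg_three_halves :
    ∫ x : ℝ, (1 + x ^ 2) ^ (-(3 / 2) : ℝ) = 2 := by
  have hderiv (x : ℝ) : HasDerivAt (fun x => sin (arctan x)) ((1 + x ^ 2) ^ (-(3 / 2) : ℝ)) x := by
    refine (hasDerivAt_arctan x).sin.congr_deriv ?_
    have hq : 0 < 1 + x ^ 2 := by positivity
    rw [cos_arctan, sqrt_eq_rpow, one_div, one_div (1 + x ^ 2), ← rpow_neg hq.le,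
      ← rpow_neg_one (1 + x ^ 2), ← rpow_add hq]
    norm_num
  have hint : Integrable fun x : ℝ => (1 + x ^ 2) ^ (-(3 / 2) : ℝ) := by
    simpa [neg_div] using integrable_rpow_neg_one_add_norm_sq (E := ℝ) (μ := volume) (r := 3)
      (by simp)
  have hbot : Tendsto (fun x => sin (arctan x)) atBot (𝓝 (sin (-(π / 2)))) :=
    (continuous_sin.tendsto _).comp (tendsto_arctan_atBot.mono_right nhdsWithin_le_nhds)
  have htop : Tendsto (fun x => sin (arctan x)) atTop (𝓝 (sin (π / 2))) :=
    (continuous_sin.tendsto _).comp (tendsto_arctan_atTop.mono_right nhdsWithin_le_nhds)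
  rw [integral_of_hasDerivAt_of_tendsto hderiv hint hbot htop]
  norm_num

end Profile

/-! ### Radial integrals of the profile -/

section RadialIntegrals

theorem lintegral_sq_add_rpow_neg_three_halves (a : ℝ) {D : ℝ} (hD : 0 < D) :
    ∫⁻ t : ℝ, ENNReal.ofReal (((t - a) ^ 2 + D) ^ (-(3 / 2) : ℝ)) = ENNReal.ofReal (2 / D) := by
  have hint : Integrable fun x : ℝ => (1 + x ^ 2) ^ (-(3 / 2) : ℝ) :=
    .of_integral_ne_zero (by rw [integral_one_add_sq_rpow_neg_three_halves]; norm_num)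
  have hs : 0 < √D := sqrt_pos.2 hD
  have hscale (t : ℝ) : ((t - a) ^ 2 + D) ^ (-(3 / 2) : ℝ) =
      D ^ (-(3 / 2) : ℝ) * (1 + ((t - a) / √D) ^ 2) ^ (-(3 / 2) : ℝ) := by
    rw [← mul_rpow hD.le (by positivity), div_pow, sq_sqrt hD.le]
    congr 1
    field_simp
    ring
  simp_rw [hscale]
  rw [← ofReal_integral_eq_lintegral_ofReal
    (((hint.comp_div hs.ne').comp_sub_right a).const_mul _) (.of_forall fun t => by positivity),
    integral_const_mul,
    integral_sub_right_eq_self (fun t : ℝ => (1 + (t / √D) ^ 2) ^ (-(3 / 2) : ℝ)) a,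
    Measure.integral_comp_div (fun x : ℝ => (1 + x ^ 2) ^ (-(3 / 2) : ℝ)),
    integral_one_add_sq_rpow_neg_three_halves, abs_of_pos hs, smul_eq_mul, ← mul_assoc,
    sqrt_eq_rpow, ← rpow_add hD, show (-(3 / 2) + 1 / 2 : ℝ) = -1 by norm_num, rpow_neg_one,
    inv_mul_eq_div]

theorem lintegral_Ioi_sub_one_sq_add_rpow_le {c : ℝ} (hc : 0 < c) (hc1 : c ≤ 1) :
    ∫⁻ t in Ioi (0 : ℝ), ENNReal.ofReal (((t - 1) ^ 2 + 2 * c * t) ^ (-(3 / 2) : ℝ)) ≤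
      ENNReal.ofReal (2 / c) := by
  rw [← lintegral_sq_add_rpow_neg_three_halves (1 - c) hc]
  refine (lintegral_mono fun t => ENNReal.ofReal_le_ofReal ?_).trans (setLIntegral_le_lintegral _ _)
  exact rpow_le_rpow_of_nonpos (by positivity) (by nlinarith) (by norm_num)

variable {b : ℝ}

theorem lintegral_Ioi_profile_le (hb : 0 < b) (hb1 : b ≤ 1) {w : ℝ} (hw : w ∈ Icc 0 2) :
    ∫⁻ t in Ioi (0 : ℝ), ‖profile ((t - 1) ^ 2) (2 * b * t) w‖ₑ ≤ ENNReal.ofReal (4 / b) := by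
  rcases hw.1.eq_or_lt with rfl | hw0
  · simp [profile]
  have hpointwise (t : ℝ) (ht : t ∈ Ioi 0) : ‖profile ((t - 1) ^ 2) (2 * b * t) w‖ₑ ≤
      ENNReal.ofReal w *
        ENNReal.ofReal (((t - 1) ^ 2 + 2 * (b * (w / 2)) * t) ^ (-(3 / 2) : ℝ)) := by
    have ht : 0 < t := ht
    have hbtw : 0 < b * t * w := by positivity
    rw [enorm_of_nonneg (profile_nonneg (sq_nonneg _) (by positivity) hw0.le),
      ← ENNReal.ofReal_mul hw0.le, profile]
    gcongr ENNReal.ofReal (w * ?_)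
    exact rpow_le_rpow_of_nonpos (by positivity) (by linarith) (by norm_num)
  calc ∫⁻ t in Ioi (0 : ℝ), ‖profile ((t - 1) ^ 2) (2 * b * t) w‖ₑ
      ≤ ∫⁻ t in Ioi (0 : ℝ), ENNReal.ofReal w *
          ENNReal.ofReal (((t - 1) ^ 2 + 2 * (b * (w / 2)) * t) ^ (-(3 / 2) : ℝ)) :=
        setLIntegral_mono' measurableSet_Ioi hpointwise
    _ ≤ ENNReal.ofReal w * ENNReal.ofReal (2 / (b * (w / 2))) := by
        rw [lintegral_const_mul' _ _ ENNReal.ofReal_ne_top]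
        gcongr
        exact lintegral_Ioi_sub_one_sq_add_rpow_le (by positivity) (by nlinarith [hw.2])
    _ = ENNReal.ofReal (4 / b) := by
        rw [← ENNReal.ofReal_mul hw0.le]
        congr 1
        field_simp
        norm_num

/-- The kernel of the cone between the points with coordinates `(t, θ)` and `(1, 0)`, without its
constant factor, where `b = (sin α) ^ 2`. -/
noncomputable def conicProfile (b t : ℝ) (θ : AddCircle (2 * π)) : ℝ :=
  profile ((t - 1) ^ 2) (2 * b * t) (1 - Real.Angle.cos θ)

theorem conicProfile_coe (b t θ : ℝ) :
    conicProfile b t (θ : AddCircle (2 * π)) = profile ((t - 1) ^ 2) (2 * b * t) (1 - cos θ) :=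
  congrArg (fun c => profile ((t - 1) ^ 2) (2 * b * t) (1 - c)) (Real.Angle.cos_coe θ)

theorem measurable_conicProfile (b : ℝ) :
    Measurable fun p : ℝ × AddCircle (2 * π) => conicProfile b p.1 p.2 := by
  have hcont : Continuous fun θ : AddCircle (2 * π) => Real.Angle.cos θ :=
    Real.Angle.continuous_cos
  have hcos := hcont.measurable
  exact measurable_profile.comp
    (f := fun p : ℝ × AddCircle (2 * π) => ((p.1 - 1) ^ 2, 2 * b * p.1, 1 - Real.Angle.cos p.2))
    (by fun_prop)

theorem lintegral_Ioi_conicProfile_le (hb : 0 < b) (hb1 : b ≤ 1) (θ : AddCircle (2 * π)) :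
    ∫⁻ t in Ioi (0 : ℝ), ‖conicProfile b t θ‖ₑ ≤ ENNReal.ofReal (4 / b) := by
  induction θ using QuotientAddGroup.induction_on with
  | H θ =>
    have hw : 1 - cos θ ∈ Icc 0 2 :=
      ⟨by linarith [cos_le_one θ], by linarith [neg_one_le_cos θ]⟩
    exact (lintegral_congr fun t => congrArg _ (conicProfile_coe b t θ)).trans_le
      (lintegral_Ioi_profile_le hb hb1 hw)

/-- The symmetric second difference of the conic profile in the angle. -/
noncomputable def conicSecondDifference (b : ℝ) (h : AddCircle (2 * π)) (t : ℝ)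
    (θ : AddCircle (2 * π)) : ℝ :=
  2 • conicProfile b t θ - conicProfile b t (θ + h) - conicProfile b t (θ - h)

theorem measurable_conicSecondDifference (b : ℝ) (h : AddCircle (2 * π)) :
    Measurable fun p : ℝ × AddCircle (2 * π) => conicSecondDifference b h p.1 p.2 := by
  have hp := measurable_conicProfile b
  have hadd := hp.comp (f := fun p : ℝ × AddCircle (2 * π) => (p.1, p.2 + h)) (by fun_prop)
  have hsub := hp.comp (f := fun p : ℝ × AddCircle (2 * π) => (p.1, p.2 - h)) (by fun_prop)
  exact ((hp.const_smul 2).sub hadd).sub hsub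

theorem lintegral_Ioi_conicSecondDifference_le (hb : 0 < b) (hb1 : b ≤ 1)
    (h θ : AddCircle (2 * π)) :
    ∫⁻ t in Ioi (0 : ℝ), ‖conicSecondDifference b h t θ‖ₑ ≤ ENNReal.ofReal (16 / b) := by
  have hmeas (θ : AddCircle (2 * π)) : Measurable fun t => ‖conicProfile b t θ‖ₑ :=
    ((measurable_conicProfile b).comp (measurable_id.prodMk measurable_const)).enorm
  have hpointwise (t : ℝ) : ‖conicSecondDifference b h t θ‖ₑ ≤ 2 * ‖conicProfile b t θ‖ₑ +
      ‖conicProfile b t (θ + h)‖ₑ + ‖conicProfile b t (θ - h)‖ₑ := by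
    refine enorm_sub_le.trans ?_
    gcongr
    refine enorm_sub_le.trans ?_
    gcongr
    rw [nsmul_eq_mul, enorm_mul, enorm_eq_ofReal_abs]
    simp
  calc ∫⁻ t in Ioi (0 : ℝ), ‖conicSecondDifference b h t θ‖ₑ
      ≤ ∫⁻ t in Ioi (0 : ℝ), (2 * ‖conicProfile b t θ‖ₑ + ‖conicProfile b t (θ + h)‖ₑ +
          ‖conicProfile b t (θ - h)‖ₑ) := lintegral_mono hpointwise
    _ = 2 * (∫⁻ t in Ioi (0 : ℝ), ‖conicProfile b t θ‖ₑ) +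
          (∫⁻ t in Ioi (0 : ℝ), ‖conicProfile b t (θ + h)‖ₑ) +
          ∫⁻ t in Ioi (0 : ℝ), ‖conicProfile b t (θ - h)‖ₑ := by
        rw [lintegral_add_right _ (hmeas _), lintegral_add_right _ (hmeas _),
          lintegral_const_mul _ (hmeas _)]
    _ ≤ 2 * ENNReal.ofReal (4 / b) + ENNReal.ofReal (4 / b) + ENNReal.ofReal (4 / b) := by
        gcongr <;> exact lintegral_Ioi_conicProfile_le hb hb1 _
    _ = ENNReal.ofReal (16 / b) := by
        rw [← ENNReal.ofReal_ofNat 2, ← ENNReal.ofReal_mul (by norm_num),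
          ← ENNReal.ofReal_add (by positivity) (by positivity),
          ← ENNReal.ofReal_add (by positivity) (by positivity)]
        congr 1
        ring

theorem sq_div_le_one_sub_cos {θ h y : ℝ} (hθ : |θ| ≤ π) (hh : 2 * h ≤ |θ|)
    (hy : y ∈ Icc (θ - h) (θ + h)) : θ ^ 2 / (2 * π ^ 2) ≤ 1 - cos y := by
  have hyθ : |y - θ| ≤ h := abs_le.2 ⟨by linarith [hy.1], by linarith [hy.2]⟩
  have hlower : |θ| / 2 ≤ |y| := by
    linarith [abs_sub_abs_le_abs_sub θ y, abs_sub_comm θ y]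
  have hupper : |y| ≤ 3 * π / 2 := by
    linarith [abs_sub_abs_le_abs_sub y θ]
  rcases le_or_gt |y| π with hyπ | hyπ
  · calc θ ^ 2 / (2 * π ^ 2) ≤ 4 * y ^ 2 / (2 * π ^ 2) := by
          gcongr
          rw [← sq_abs θ, ← sq_abs y]
          nlinarith [abs_nonneg θ]
      _ = 2 / π ^ 2 * y ^ 2 := by ring
      _ ≤ 1 - cos y := by linarith [cos_le_one_sub_mul_cos_sq hyπ]
  · have hcos : cos y ≤ 0 := by
      rw [← cos_abs]
      exact cos_nonpos_of_pi_div_two_le_of_le (by linarith [pi_pos]) (by linarith)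
    calc θ ^ 2 / (2 * π ^ 2) ≤ 1 := by
          rw [div_le_one (by positivity), ← sq_abs θ]
          nlinarith [abs_nonneg θ]
      _ ≤ 1 - cos y := by linarith

theorem enorm_conicSecondDifference_le (hb : 0 < b) {h θ t : ℝ} (hh : 0 < h) (hθ : |θ| ≤ π)
    (hθh : 2 * h < |θ|) (ht : 0 < t) :
    ‖conicSecondDifference b h t θ‖ₑ ≤ ENNReal.ofReal (14 * h ^ 2) *
      ENNReal.ofReal
        (((t - 1) ^ 2 + 2 * (b * (θ ^ 2 / (2 * π ^ 2))) * t) ^ (-(3 / 2) : ℝ)) := by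
  have hθ0 : θ ≠ 0 := abs_pos.1 (by linarith)
  have hdiff := abs_second_difference_profile_le (A := (t - 1) ^ 2) (B := 2 * b * t)
    (m := (t - 1) ^ 2 + 2 * (b * (θ ^ 2 / (2 * π ^ 2))) * t) (x := θ) (sq_nonneg _)
    (by positivity) hh.le (by positivity) fun y hy => by
      rw [show 2 * (b * (θ ^ 2 / (2 * π ^ 2))) * t = 2 * b * t * (θ ^ 2 / (2 * π ^ 2)) by ring]
      gcongr
      exact sq_div_le_one_sub_cos hθ hθh.le hy
  rw [enorm_eq_ofReal_abs, ← ENNReal.ofReal_mul (by positivity)]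
  refine ENNReal.ofReal_le_ofReal ?_
  rw [conicSecondDifference, ← AddCircle.coe_add, ← AddCircle.coe_sub, conicProfile_coe,
    conicProfile_coe, conicProfile_coe]
  exact hdiff.trans_eq (by ring)

theorem lintegral_Ioi_conicSecondDifference_le_of_lt (hb : 0 < b) (hb1 : b ≤ 1) {h θ : ℝ}
    (hh : 0 < h) (hθ : |θ| ≤ π) (hθh : 2 * h < |θ|) :
    ∫⁻ t in Ioi (0 : ℝ), ‖conicSecondDifference b h t θ‖ₑ ≤
      ENNReal.ofReal (56 * π ^ 2 * h ^ 2 / (b * θ ^ 2)) := by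
  have hθ0 : θ ≠ 0 := abs_pos.1 (by linarith)
  have hv1 : θ ^ 2 / (2 * π ^ 2) ≤ 1 := by
    rw [div_le_one (by positivity), ← sq_abs θ]
    nlinarith [abs_nonneg θ]
  calc ∫⁻ t in Ioi (0 : ℝ), ‖conicSecondDifference b h t θ‖ₑ
      ≤ ∫⁻ t in Ioi (0 : ℝ), ENNReal.ofReal (14 * h ^ 2) * ENNReal.ofReal
          (((t - 1) ^ 2 + 2 * (b * (θ ^ 2 / (2 * π ^ 2))) * t) ^ (-(3 / 2) : ℝ)) :=
        setLIntegral_mono' measurableSet_Ioi fun t ht =>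
          enorm_conicSecondDifference_le hb hh hθ hθh ht
    _ ≤ ENNReal.ofReal (14 * h ^ 2) * ENNReal.ofReal (2 / (b * (θ ^ 2 / (2 * π ^ 2)))) := by
        rw [lintegral_const_mul' _ _ ENNReal.ofReal_ne_top]
        gcongr
        exact lintegral_Ioi_sub_one_sq_add_rpow_le (by positivity)
          (mul_le_one₀ hb1 (by positivity) hv1)
    _ = ENNReal.ofReal (56 * π ^ 2 * h ^ 2 / (b * θ ^ 2)) := by
        rw [← ENNReal.ofReal_mul (by positivity)]
        congr 1
        field_simp
        norm_num

theorem lintegral_Ioi_conicSecondDifference_le_cauchy (hb : 0 < b) (hb1 : b ≤ 1) {h θ : ℝ}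
    (hh : 0 < h) (hθ : |θ| ≤ π) :
    ∫⁻ t in Ioi (0 : ℝ), ‖conicSecondDifference b h t θ‖ₑ ≤
      ENNReal.ofReal (700 / b * (1 + (θ / h) ^ 2)⁻¹) := by
  have hcauchy : (1 + (θ / h) ^ 2)⁻¹ = h ^ 2 / (h ^ 2 + θ ^ 2) := by field_simp
  rw [hcauchy]
  rcases le_or_gt |θ| (2 * h) with hnear | hfar
  · refine (lintegral_Ioi_conicSecondDifference_le hb hb1 h θ).trans (ENNReal.ofReal_le_ofReal ?_)
    have hθh : θ ^ 2 ≤ 4 * h ^ 2 := by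
      rw [← sq_abs θ]
      nlinarith [abs_nonneg θ]
    rw [div_mul_div_comm, div_le_div_iff₀ hb (by positivity)]
    nlinarith
  · refine (lintegral_Ioi_conicSecondDifference_le_of_lt hb hb1 hh hθ hfar).trans
      (ENNReal.ofReal_le_ofReal ?_)
    have hθ0 : θ ≠ 0 := abs_pos.1 (by linarith)
    have hθh : 4 * h ^ 2 ≤ θ ^ 2 := by
      rw [← sq_abs θ]
      nlinarith [abs_nonneg θ]
    have hπ : π ^ 2 ≤ 10 := by nlinarith [pi_lt_d2, pi_pos]
    have hle : 56 * π ^ 2 * (h ^ 2 + θ ^ 2) ≤ 700 * θ ^ 2 := by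
      nlinarith [mul_le_mul_of_nonneg_right hπ (by positivity : 0 ≤ h ^ 2 + θ ^ 2)]
    rw [div_mul_div_comm, div_le_div_iff₀ (by positivity) (by positivity)]
    calc 56 * π ^ 2 * h ^ 2 * (b * (h ^ 2 + θ ^ 2))
        = b * h ^ 2 * (56 * π ^ 2 * (h ^ 2 + θ ^ 2)) := by ring
      _ ≤ b * h ^ 2 * (700 * θ ^ 2) := by gcongr
      _ = 700 * h ^ 2 * (b * θ ^ 2) := by ring

theorem lintegral_conicSecondDifference_le (hb : 0 < b) (hb1 : b ≤ 1) {h : ℝ} (hh : 0 < h) :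
    ∫⁻ θ : AddCircle (2 * π), ∫⁻ t in Ioi (0 : ℝ), ‖conicSecondDifference b h t θ‖ₑ ≤
      ENNReal.ofReal (700 / b * (π * h)) := by
  have hint : Integrable fun θ : ℝ => (1 + (θ / h) ^ 2)⁻¹ :=
    integrable_inv_one_add_sq.comp_div hh.ne'
  rw [← AddCircle.lintegral_preimage (2 * π) (-π)]
  calc ∫⁻ θ in Ioc (-π) (-π + 2 * π), ∫⁻ t in Ioi (0 : ℝ), ‖conicSecondDifference b h t θ‖ₑ
      ≤ ∫⁻ θ in Ioc (-π) (-π + 2 * π), ENNReal.ofReal (700 / b * (1 + (θ / h) ^ 2)⁻¹) :=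
        setLIntegral_mono' measurableSet_Ioc fun θ hθ =>
          lintegral_Ioi_conicSecondDifference_le_cauchy hb hb1 hh
            (abs_le.2 ⟨hθ.1.le, by linarith [hθ.2]⟩)
    _ ≤ ∫⁻ θ : ℝ, ENNReal.ofReal (700 / b * (1 + (θ / h) ^ 2)⁻¹) := setLIntegral_le_lintegral _ _
    _ = ENNReal.ofReal (700 / b * (π * h)) := by
        rw [← ofReal_integral_eq_lintegral_ofReal (hint.const_mul _)
          (.of_forall fun θ => by positivity), integral_const_mul,
          Measure.integral_comp_div (fun x : ℝ => (1 + x ^ 2)⁻¹), integral_univ_inv_one_add_sq,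
          abs_of_pos hh, smul_eq_mul, mul_comm h]

end RadialIntegrals

/-! ### Decay of character integrals -/

section Decay

variable {G : Type*} [AddCommGroup G] [MeasurableSpace G] [MeasurableAdd G] {μ : Measure G}
  [μ.IsAddRightInvariant] {k : G → ℂ} {χ : AddChar G ℂ} {a : G}

theorem four_mul_integral_mul_addChar (hk : Integrable k μ) (hχm : AEStronglyMeasurable χ μ)
    (hχ : ∀ g, ‖χ g‖ = 1) (ha : χ a = -1) :
    4 * ∫ g, k g * χ g ∂μ = ∫ g, (2 • k g - k (g + a) - k (g - a)) * χ g ∂μ := by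
  have hint : Integrable (fun g => k g * χ g) μ :=
    hk.mul_bdd hχm (.of_forall fun g => (hχ g).le)
  have hshift (g : G) : (2 • k g - k (g + a) - k (g - a)) * χ g =
      2 * (k g * χ g) + k (g + a) * χ (g + a) + k (g - a) * χ (g - a) := by
    rw [AddChar.map_add_eq_mul, AddChar.map_sub_eq_div, ha, nsmul_eq_mul]
    push_cast
    ring
  simp_rw [hshift]
  rw [integral_add ((hint.const_mul 2).fun_add (hint.comp_add_right a)) (hint.comp_sub_right a),
    integral_add (hint.const_mul 2) (hint.comp_add_right a), integral_const_mul,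
    integral_add_right_eq_self (fun g => k g * χ g),
    integral_sub_right_eq_self (fun g => k g * χ g)]
  ring

theorem four_mul_enorm_integral_mul_addChar_le (hk : Integrable k μ)
    (hχm : AEStronglyMeasurable χ μ) (hχ : ∀ g, ‖χ g‖ = 1) (ha : χ a = -1) :
    4 * ‖∫ g, k g * χ g ∂μ‖ₑ ≤ ∫⁻ g, ‖2 • k g - k (g + a) - k (g - a)‖ₑ ∂μ := by
  have hfour : ‖(4 : ℂ)‖ₑ = 4 := by simp [← ofReal_norm]
  calc 4 * ‖∫ g, k g * χ g ∂μ‖ₑ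
      = ‖∫ g, (2 • k g - k (g + a) - k (g - a)) * χ g ∂μ‖ₑ := by
        rw [← four_mul_integral_mul_addChar hk hχm hχ ha, enorm_mul, hfour]
    _ ≤ ∫⁻ g, ‖(2 • k g - k (g + a) - k (g - a)) * χ g‖ₑ ∂μ := enorm_integral_le_lintegral_enorm _
    _ = ∫⁻ g, ‖2 • k g - k (g + a) - k (g - a)‖ₑ ∂μ := by
        simp_rw [enorm_mul, ← ofReal_norm (χ _), hχ, ENNReal.ofReal_one, mul_one]

end Decay

/-! ### The cone kernel in logarithmic coordinates -/

section LogCoordinates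

theorem lintegral_Ioi_eq_lintegral_exp (f : ℝ → ENNReal) :
    ∫⁻ t in Ioi (0 : ℝ), f t = ∫⁻ x : ℝ, ENNReal.ofReal (exp x) * f (exp x) := by
  simpa [image_univ, Real.range_exp] using
    lintegral_image_eq_lintegral_abs_deriv_mul (s := univ) MeasurableSet.univ
      (fun x _ => (hasDerivAt_exp x).hasDerivWithinAt) exp_injective.injOn f

theorem integral_Ioi_eq_integral_exp {E : Type*} [NormedAddCommGroup E] [NormedSpace ℝ E]
    (f : ℝ → E) : ∫ t in Ioi (0 : ℝ), f t = ∫ x : ℝ, exp x • f (exp x) := by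
  simpa [image_univ, Real.range_exp] using
    integral_image_eq_integral_abs_deriv_smul (s := univ) MeasurableSet.univ
      (fun x _ => (hasDerivAt_exp x).hasDerivWithinAt) exp_injective.injOn f

theorem lintegral_cylinder_enorm_exp_mul {F : ℝ → AddCircle (2 * π) → ℝ}
    (hF : Measurable fun p : ℝ × AddCircle (2 * π) => F p.1 p.2) (c : ℝ) :
    ∫⁻ g : Cylinder, ‖((c * (exp g.1 * F (exp g.1) g.2) : ℝ) : ℂ)‖ₑ =
      ‖c‖ₑ * ∫⁻ θ : AddCircle (2 * π), ∫⁻ t in Ioi (0 : ℝ), ‖F t θ‖ₑ := by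
  have hcomp : Measurable fun g : Cylinder => F (exp g.1) g.2 :=
    hF.comp (f := fun g : Cylinder => (exp g.1, g.2)) (by fun_prop)
  have hreal : Measurable fun g : Cylinder => c * (exp g.1 * F (exp g.1) g.2) :=
    ((measurable_exp.comp measurable_fst).mul hcomp).const_mul c
  rw [← lintegral_const_mul' _ _ enorm_ne_top, Measure.volume_eq_prod,
    lintegral_prod_symm _ hreal.complex_ofReal.enorm.aemeasurable]
  refine lintegral_congr fun θ => ?_
  rw [lintegral_Ioi_eq_lintegral_exp, ← lintegral_const_mul' _ _ enorm_ne_top]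
  refine lintegral_congr fun x => ?_
  rw [← ofReal_norm, Complex.norm_real, ofReal_norm, enorm_mul, enorm_mul,
    enorm_of_nonneg (exp_nonneg x)]

variable {α : ℝ}

/-- The cone kernel in the coordinates `t = exp x`, `θ`, normalised so that the layer potential
operator becomes convolution with it on the cylinder. -/
noncomputable def cylinderKernel (α : ℝ) (g : Cylinder) : ℂ :=
  (sin α ^ 2 * cos α / (2 * π) * (exp g.1 * conicProfile (sin α ^ 2) (exp g.1) g.2) : ℝ)

theorem measurable_cylinderKernel (α : ℝ) : Measurable (cylinderKernel α) := by
  have hprofile : Measurable fun g : Cylinder => conicProfile (sin α ^ 2) (exp g.1) g.2 :=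
    (measurable_conicProfile _).comp (f := fun g : Cylinder => (exp g.1, g.2)) (by fun_prop)
  unfold cylinderKernel
  fun_prop

theorem lintegral_enorm_cylinderKernel_le (hs : 0 < sin α) :
    ∫⁻ g, ‖cylinderKernel α g‖ₑ ≤ ENNReal.ofReal 4 := by
  have hb1 : sin α ^ 2 ≤ 1 := sin_sq_le_one α
  simp_rw [cylinderKernel]
  rw [lintegral_cylinder_enorm_exp_mul (measurable_conicProfile _)]
  calc ‖sin α ^ 2 * cos α / (2 * π)‖ₑ * ∫⁻ θ : AddCircle (2 * π), ∫⁻ t in Ioi (0 : ℝ),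
        ‖conicProfile (sin α ^ 2) t θ‖ₑ
      ≤ ‖sin α ^ 2 * cos α / (2 * π)‖ₑ *
          ∫⁻ _ : AddCircle (2 * π), ENNReal.ofReal (4 / sin α ^ 2) := by
        gcongr with θ
        exact lintegral_Ioi_conicProfile_le (by positivity) hb1 θ
    _ = ENNReal.ofReal (4 * |cos α|) := by
        rw [lintegral_const, AddCircle.measure_univ, enorm_eq_ofReal_abs,
          ← ENNReal.ofReal_mul (by positivity), ← ENNReal.ofReal_mul (by positivity), abs_div,
          abs_mul, abs_of_pos (by positivity : 0 < sin α ^ 2), abs_of_pos two_pi_pos]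
        congr 1
        field_simp
    _ ≤ ENNReal.ofReal 4 := ENNReal.ofReal_le_ofReal (by linarith [abs_cos_le_one α])

theorem integrable_cylinderKernel (hs : 0 < sin α) : Integrable (cylinderKernel α) :=
  ⟨(measurable_cylinderKernel α).aestronglyMeasurable,
    (lintegral_enorm_cylinderKernel_le hs).trans_lt ENNReal.ofReal_lt_top⟩

theorem lintegral_second_difference_cylinderKernel_le (hs : 0 < sin α) {h : ℝ} (hh : 0 < h) :
    ∫⁻ g : Cylinder, ‖2 • cylinderKernel α g - cylinderKernel α (g + (0, (h : AddCircle (2 * π))))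
      - cylinderKernel α (g - (0, (h : AddCircle (2 * π))))‖ₑ ≤ ENNReal.ofReal (350 * h) := by
  have hdiff (g : Cylinder) : 2 • cylinderKernel α g -
      cylinderKernel α (g + (0, (h : AddCircle (2 * π)))) -
      cylinderKernel α (g - (0, (h : AddCircle (2 * π)))) =
        (sin α ^ 2 * cos α / (2 * π) *
          (exp g.1 * conicSecondDifference (sin α ^ 2) h (exp g.1) g.2) : ℝ) := by
    simp only [cylinderKernel, conicSecondDifference, Prod.fst_add, Prod.snd_add, Prod.fst_sub,
      Prod.snd_sub, add_zero, sub_zero]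
    push_cast
    ring
  simp_rw [hdiff]
  rw [lintegral_cylinder_enorm_exp_mul (measurable_conicSecondDifference _ _)]
  calc ‖sin α ^ 2 * cos α / (2 * π)‖ₑ * ∫⁻ θ : AddCircle (2 * π), ∫⁻ t in Ioi (0 : ℝ),
        ‖conicSecondDifference (sin α ^ 2) h t θ‖ₑ
      ≤ ‖sin α ^ 2 * cos α / (2 * π)‖ₑ * ENNReal.ofReal (700 / sin α ^ 2 * (π * h)) := by
        gcongr
        exact lintegral_conicSecondDifference_le (by positivity) (sin_sq_le_one α) hh
    _ = ENNReal.ofReal (350 * h * |cos α|) := by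
        rw [enorm_eq_ofReal_abs, ← ENNReal.ofReal_mul (by positivity), abs_div, abs_mul,
          abs_of_pos (by positivity : 0 < sin α ^ 2), abs_of_pos two_pi_pos]
        congr 1
        field_simp
        ring
    _ ≤ ENNReal.ofReal (350 * h) :=
        ENNReal.ofReal_le_ofReal (mul_le_of_le_one_right (by positivity) (abs_cos_le_one α))

theorem mellinChar_zero_pi_div_abs {n : ℤ} (hn : n ≠ 0) (ξ : ℝ) :
    mellinChar n ξ (0, ((π / |(n : ℝ)| : ℝ) : AddCircle (2 * π))) = -1 := by
  have hn' : (n : ℝ) ≠ 0 := Int.cast_ne_zero.2 hn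
  have hcexp : fourier (-n) ((π / |(n : ℝ)| : ℝ) : AddCircle (2 * π)) =
      Complex.exp (((-(n / |(n : ℝ)|) * π : ℝ) : ℂ) * Complex.I) := by
    rw [fourier_two_pi_coe_apply]
    congr 1
    push_cast
    ring
  rw [mellinChar_apply, hcexp]
  rcases abs_choice (n : ℝ) with habs | habs
  · simp [habs, div_self hn', Complex.exp_neg, Complex.exp_pi_mul_I]
  · simp [habs, div_neg, div_self hn', Complex.exp_pi_mul_I]

theorem norm_integral_cylinderKernel_mul_mellinChar_le (hs : 0 < sin α) (n : ℤ) (ξ : ℝ) :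
    ‖∫ g, cylinderKernel α g * mellinChar n ξ g‖ ≤ 175 * π / (n.natAbs + 1) := by
  have hk := integrable_cylinderKernel hs
  rw [Nat.cast_natAbs, Int.cast_abs, le_div_iff₀ (by positivity)]
  rcases eq_or_ne n 0 with rfl | hn
  · have hle : ‖∫ g, cylinderKernel α g * mellinChar 0 ξ g‖ₑ ≤ ENNReal.ofReal 4 := by
      refine (enorm_integral_le_lintegral_enorm _).trans
        ((lintegral_congr fun g => ?_).trans_le (lintegral_enorm_cylinderKernel_le hs))
      rw [enorm_mul, ← ofReal_norm (mellinChar _ _ _), norm_mellinChar, ENNReal.ofReal_one, mul_one]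
    rw [← ofReal_norm, ENNReal.ofReal_le_ofReal_iff (by norm_num)] at hle
    rw [Int.cast_zero, abs_zero]
    linarith [pi_gt_three]
  · have hn1 : (1 : ℝ) ≤ |(n : ℝ)| := mod_cast Int.one_le_abs hn
    have hle := (four_mul_enorm_integral_mul_addChar_le hk
      (continuous_mellinChar n ξ).aestronglyMeasurable (norm_mellinChar n ξ)
      (mellinChar_zero_pi_div_abs hn ξ)).trans
      (lintegral_second_difference_cylinderKernel_le hs (by positivity))
    rw [← ENNReal.ofReal_ofNat 4, ← ofReal_norm, ← ENNReal.ofReal_mul (by norm_num),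
      ENNReal.ofReal_le_ofReal_iff (by positivity), mul_div_assoc', le_div_iff₀ (by positivity)]
      at hle
    nlinarith [norm_nonneg (∫ g, cylinderKernel α g * mellinChar n ξ g)]

end LogCoordinates

/-! ### The layer potential operator of the cone -/

section Cone

variable {α : ℝ}

theorem inner_coneParam_sub_coneNormal (α t θ t' θ' : ℝ) :
    inner ℝ (coneParam α t θ - coneParam α t' θ') (coneNormal α θ) =
      sin α * cos α * (t' * (1 - cos (θ - θ'))) := by
  simp only [coneParam, coneNormal, PiLp.inner_apply, Fin.sum_univ_three, PiLp.sub_apply,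
    cos_sub θ θ', Fin.isValue, Matrix.cons_val_zero, Matrix.cons_val_one, Matrix.cons_val,
    RCLike.inner_apply, ringHom_apply]
  linear_combination (sin α * cos α * t) * sin_sq_add_cos_sq θ

theorem norm_coneParam_sub_sq (α t θ t' θ' : ℝ) :
    ‖coneParam α t' θ' - coneParam α t θ‖ ^ 2 =
      (t - t') ^ 2 + 2 * sin α ^ 2 * (t * t') * (1 - cos (θ - θ')) := by
  simp only [EuclideanSpace.norm_sq_eq, coneParam, Fin.sum_univ_three, PiLp.sub_apply,
    cos_sub θ θ', Real.norm_eq_abs, sq_abs, Fin.isValue, Matrix.cons_val_zero,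
    Matrix.cons_val_one, Matrix.cons_val]
  linear_combination (sin α ^ 2 * t ^ 2) * sin_sq_add_cos_sq θ +
    (sin α ^ 2 * t' ^ 2) * sin_sq_add_cos_sq θ' + (t - t') ^ 2 * sin_sq_add_cos_sq α

theorem coneKernel_eq_conicProfile (α : ℝ) {t t' : ℝ} (ht : 0 ≤ t) (ht' : 0 < t') (θ θ' : ℝ) :
    coneKernel α t θ t' θ' = sin α * cos α *
      (conicProfile (sin α ^ 2) (t / t') ((θ - θ' : ℝ) : AddCircle (2 * π)) / t' ^ 2) := by
  have hw : 0 ≤ 1 - cos (θ - θ') := by linarith [cos_le_one (θ - θ')]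
  set Q := (t / t' - 1) ^ 2 + 2 * sin α ^ 2 * (t / t') * (1 - cos (θ - θ')) with hQ
  have hQ0 : 0 ≤ Q := by positivity
  have hnorm : ‖coneParam α t' θ' - coneParam α t θ‖ = t' * √Q := by
    rw [← sqrt_sq (norm_nonneg _), norm_coneParam_sub_sq, ← sqrt_sq ht'.le,
      ← sqrt_mul (sq_nonneg _), sqrt_sq ht'.le, hQ]
    congr 1
    field_simp
  have hrpow : Q ^ (-(3 / 2) : ℝ) = (√Q ^ 3)⁻¹ := by
    rw [rpow_neg hQ0, sqrt_eq_rpow, ← rpow_mul_natCast hQ0]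
    norm_num
  rw [coneKernel, inner_coneParam_sub_coneNormal, hnorm, conicProfile_coe, profile, hrpow]
  field_simp

theorem integral_cylinderKernel_mul_mellinChar (hs : 0 < sin α) (n : ℤ) (ξ : ℝ) :
    ∫ g, cylinderKernel α g * mellinChar n ξ g = modalEigenvalue α n ξ := by
  have hint : Integrable fun g => cylinderKernel α g * mellinChar n ξ g :=
    (integrable_cylinderKernel hs).mul_bdd (continuous_mellinChar n ξ).aestronglyMeasurable
      (.of_forall fun g => (norm_mellinChar n ξ g).le)
  rw [Measure.volume_eq_prod] at hint ⊢
  rw [integral_prod _ hint, modalEigenvalue, ← integral_const_mul, integral_Ioi_eq_integral_exp]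
  refine integral_congr_ae (.of_forall fun x => ?_)
  have hexp0 : (exp x : ℂ) ≠ 0 := mod_cast (exp_pos x).ne'
  have hcpow : (exp x : ℂ) ^ (Complex.I * (ξ : ℂ)) = Complex.exp (Complex.I * ξ * x) := by
    rw [Complex.cpow_def_of_ne_zero hexp0, ← Complex.ofReal_log (exp_pos x).le, log_exp]
    ring_nf
  have hslice (θ : ℝ) : cylinderKernel α (x, θ) * mellinChar n ξ (x, θ) =
      (sin α / (2 * π) * exp x * Complex.exp (Complex.I * ξ * x)) *
        (Complex.exp (-Complex.I * n * θ) * (coneKernel α (exp x) θ 1 0 : ℂ)) := by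
    rw [coneKernel_eq_conicProfile α (exp_pos x).le one_pos, mellinChar_apply,
      fourier_two_pi_coe_apply, cylinderKernel, div_one, sub_zero]
    push_cast
    ring_nf
  simp only [← AddCircle.intervalIntegral_preimage (2 * π) 0, hslice, zero_add]
  rw [intervalIntegral.integral_const_mul, modalKernel, Complex.cpow_add _ _ hexp0,
    Complex.cpow_one, hcpow, Complex.real_smul]
  push_cast
  rw [← Complex.ofReal_exp]
  field_simp

theorem norm_modalEigenvalue_le (hs : 0 < sin α) (n : ℤ) (ξ : ℝ) :
    ‖modalEigenvalue α n ξ‖ ≤ 175 * π / (n.natAbs + 1) :=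
  integral_cylinderKernel_mul_mellinChar hs n ξ ▸
    norm_integral_cylinderKernel_mul_mellinChar_le hs n ξ

theorem norm_le_of_mem_modalCurve (hs : 0 < sin α) {n : ℤ} {z : ℂ} (hz : z ∈ modalCurve α n) :
    ‖z‖ ≤ 175 * π / (n.natAbs + 1) := by
  rcases hz with ⟨ξ, rfl⟩ | rfl
  · exact norm_modalEigenvalue_le hs n ξ
  · rw [norm_zero]
    positivity

/-- The representative of an angle in `(0, 2π]`. -/
noncomputable def angleRep (θ : AddCircle (2 * π)) : ℝ :=
  AddCircle.equivIoc (2 * π) 0 θ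

theorem coe_angleRep (θ : AddCircle (2 * π)) : (angleRep θ : AddCircle (2 * π)) = θ :=
  (AddCircle.equivIoc (2 * π) 0).symm_apply_apply θ

theorem measurePreserving_angleRep :
    MeasurePreserving angleRep volume (volume.restrict (Ioo 0 (2 * π))) := by
  have hIoc : (volume : Measure ℝ).restrict (Ioo 0 (2 * π)) =
      volume.restrict (Ioc 0 (0 + 2 * π)) := by
    rw [restrict_Ioo_eq_restrict_Ioc, zero_add]
  rw [hIoc]
  exact (measurePreserving_subtype_coe measurableSet_Ioc).comp
    (AddCircle.measurePreserving_equivIoc (2 * π) (a := 0))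

theorem measurePreserving_exp_withDensity (s : ℝ) :
    MeasurePreserving exp (volume.withDensity fun x => ENNReal.ofReal (s * exp x ^ 2))
      ((volume.restrict (Ioi 0)).withDensity fun t => ENNReal.ofReal (s * t)) := by
  refine ⟨measurable_exp, ?_⟩
  ext A hA
  rw [Measure.map_apply measurable_exp hA, withDensity_apply _ (measurable_exp hA),
    withDensity_apply _ hA, ← lintegral_indicator hA, ← lintegral_indicator (measurable_exp hA),
    lintegral_Ioi_eq_lintegral_exp]
  refine lintegral_congr fun x => ?_
  by_cases hx : exp x ∈ A
  · rw [indicator_of_mem hx, indicator_of_mem (mem_preimage.2 hx),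
      ← ENNReal.ofReal_mul (exp_pos x).le]
    ring_nf
  · rw [indicator_of_notMem hx, indicator_of_notMem (by exact hx), mul_zero]

/-- The coordinates `(t, θ)` on the cone of a point of the cylinder. -/
noncomputable def coneCoord (g : Cylinder) : ℝ × ℝ :=
  (exp g.1, angleRep g.2)

/-- The point of the cylinder with coordinates `(t, θ)` on the cone. -/
noncomputable def cylinderCoord (p : ℝ × ℝ) : Cylinder :=
  (log p.1, (p.2 : AddCircle (2 * π)))

/-- The square root of the density of the cone measure in logarithmic coordinates. -/
noncomputable def coneWeight (α : ℝ) (g : Cylinder) : ℝ :=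
  √(sin α) * exp g.1

theorem measurePreserving_coneCoord (hs : 0 < sin α) :
    MeasurePreserving coneCoord (volume.withDensity fun g => ENNReal.ofReal (coneWeight α g ^ 2))
      (muCone α) := by
  have hprod := (measurePreserving_exp_withDensity (sin α)).prod measurePreserving_angleRep
  rw [prod_withDensity_left (by fun_prop)] at hprod
  simp_rw [coneWeight, mul_pow, sq_sqrt hs.le]
  exact hprod

theorem isWeightedChange_coneCoord (hs : 0 < sin α) :
    IsWeightedChange coneCoord cylinderCoord (coneWeight α) volume (muCone α) where
  measurePreserving := measurePreserving_coneCoord hs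
  leftInverse g := by simp only [cylinderCoord, coneCoord, log_exp, coe_angleRep]
  measurable_inv := (measurable_log.comp measurable_fst).prodMk
    (AddCircle.measurable_mk'.comp measurable_snd)
  measurable_weight := by unfold coneWeight; fun_prop
  weight_pos g := mul_pos (sqrt_pos.2 hs) (exp_pos _)

/-- The kernel of the layer potential operator of the cone with respect to `muCone α`. -/
noncomputable def layerKernel (α : ℝ) (p q : ℝ × ℝ) : ℂ :=
  ((1 / (2 * π) : ℝ) : ℂ) * (coneKernel α p.1 p.2 q.1 q.2 : ℂ)

theorem coneWeight_mul_layerKernel_mul_coneWeight (hs : 0 < sin α) (g h : Cylinder) :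
    coneWeight α g * layerKernel α (coneCoord g) (coneCoord h) * coneWeight α h =
      cylinderKernel α (g - h) := by
  have hangle : ((angleRep g.2 - angleRep h.2 : ℝ) : AddCircle (2 * π)) = g.2 - h.2 := by
    rw [AddCircle.coe_sub, coe_angleRep, coe_angleRep]
  have hsqrt : √(sin α) * √(sin α) = sin α := mul_self_sqrt hs.le
  rw [layerKernel, coneCoord, coneCoord,
    coneKernel_eq_conicProfile α (exp_pos _).le (exp_pos _), hangle, ← exp_sub, cylinderKernel,
    coneWeight, coneWeight, Prod.fst_sub, Prod.snd_sub, exp_sub]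
  norm_cast
  field_simp
  linear_combination (cos α *
    conicProfile (sin α ^ 2) (exp g.1 / exp h.1) (g.2 - h.2)) * hsqrt

theorem muCone_eq_withDensity (α : ℝ) :
    muCone α = (volume.restrict (Ioi 0 ×ˢ Ioo 0 (2 * π))).withDensity
      fun q : ℝ × ℝ => ENNReal.ofReal (sin α * q.1) := by
  rw [muCone, prod_withDensity_left (by fun_prop), Measure.prod_restrict, Measure.volume_eq_prod]

theorem toReal_density_smul_ae_eq (hs : 0 < sin α) (f : ℝ × ℝ → ℂ) :
    (fun q => (ENNReal.ofReal (sin α * q.1)).toReal • f q)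
      =ᵐ[volume.restrict (Ioi 0 ×ˢ Ioo 0 (2 * π))] fun q => f q * ((sin α * q.1 : ℝ) : ℂ) := by
  filter_upwards [ae_restrict_mem (measurableSet_Ioi.prod measurableSet_Ioo)] with q hq
  have hq0 : 0 < q.1 := hq.1
  rw [ENNReal.toReal_ofReal (by positivity), Complex.real_smul, mul_comm]

theorem integrable_muCone_iff (hs : 0 < sin α) {f : ℝ × ℝ → ℂ} :
    Integrable f (muCone α) ↔
      IntegrableOn (fun q => f q * ((sin α * q.1 : ℝ) : ℂ)) (Ioi 0 ×ˢ Ioo 0 (2 * π)) := by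
  rw [muCone_eq_withDensity, integrable_withDensity_iff_integrable_smul' (by fun_prop) (by simp),
    integrable_congr (toReal_density_smul_ae_eq hs f), IntegrableOn]

theorem integral_muCone (hs : 0 < sin α) (f : ℝ × ℝ → ℂ) :
    ∫ q, f q ∂muCone α =
      ∫ q in Ioi 0 ×ˢ Ioo 0 (2 * π), f q * ((sin α * q.1 : ℝ) : ℂ) := by
  rw [muCone_eq_withDensity, integral_withDensity_eq_integral_toReal_smul (by fun_prop) (by simp),
    integral_congr_ae (toReal_density_smul_ae_eq hs f)]

theorem isIntegralOperator_layerKernel_iff (hs : 0 < sin α)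
    {K : Lp ℂ 2 (muCone α) →L[ℂ] Lp ℂ 2 (muCone α)} :
    IsIntegralOperator (muCone α) (layerKernel α) K ↔
      ∀ f : Lp ℂ 2 (muCone α), ∀ᵐ p ∂(muCone α),
        IntegrableOn (fun q : ℝ × ℝ =>
            (coneKernel α p.1 p.2 q.1 q.2 : ℂ) * f q * ((sin α * q.1 : ℝ) : ℂ))
          (Ioi (0 : ℝ) ×ˢ Ioo (0 : ℝ) (2 * π)) ∧
        (K f : ℝ × ℝ → ℂ) p = ((1 / (2 * π) : ℝ) : ℂ) *
          ∫ q in Ioi (0 : ℝ) ×ˢ Ioo (0 : ℝ) (2 * π),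
            (coneKernel α p.1 p.2 q.1 q.2 : ℂ) * f q * ((sin α * q.1 : ℝ) : ℂ) := by
  have hconst : ((1 / (2 * π) : ℝ) : ℂ) ≠ 0 := mod_cast (by positivity : 1 / (2 * π) ≠ 0)
  refine forall_congr' fun f => eventually_congr (.of_forall fun p => ?_)
  simp_rw [layerKernel, mul_assoc ((1 / (2 * π) : ℝ) : ℂ)]
  rw [integrable_const_mul_iff hconst.isUnit, integral_const_mul, integrable_muCone_iff hs,
    integral_muCone hs]

/-- Convolution with `cylinderKernel` on the cylinder, which is the layer potential operator in
logarithmic coordinates. -/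
noncomputable def cylinderOperator (hs : 0 < sin α) :
    Lp ℂ 2 (volume : Measure Cylinder) →L[ℂ] Lp ℂ 2 (volume : Measure Cylinder) :=
  convolutionOperator volume ENNReal.ofNat_ne_top ((integrable_cylinderKernel hs).toL1 _)

theorem integral_toL1_cylinderKernel_mul_mellinChar (hs : 0 < sin α) (n : ℤ) (ξ : ℝ) :
    ∫ g, (integrable_cylinderKernel hs).toL1 _ g * mellinChar n ξ g = modalEigenvalue α n ξ := by
  rw [← integral_cylinderKernel_mul_mellinChar hs]
  exact integral_congr_ae ((integrable_cylinderKernel hs).coeFn_toL1.mul .rfl)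

theorem modalEigenvalue_mem_spectrum_cylinderOperator (hs : 0 < sin α) (n : ℤ) (ξ : ℝ) :
    modalEigenvalue α n ξ ∈ spectrum ℂ (cylinderOperator hs) := by
  rw [← integral_toL1_cylinderKernel_mul_mellinChar hs]
  exact integral_mul_addChar_mem_spectrum_convolutionOperator
    isSubexponentialLength_abs.comp_fst _ _ (continuous_mellinChar n ξ) (norm_mellinChar n ξ)

theorem tendsto_modalEigenvalue_atTop (hs : 0 < sin α) (ξ : ℝ) :
    Tendsto (fun n : ℕ => modalEigenvalue α n ξ) atTop (𝓝 0) := by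
  refine squeeze_zero_norm (a := fun n : ℕ => 175 * π * (1 / ((n : ℝ) + 1))) (fun n => ?_) ?_
  · simpa [div_eq_mul_inv] using norm_modalEigenvalue_le hs n ξ
  · simpa using (tendsto_one_div_add_atTop_nhds_zero_nat (𝕜 := ℝ)).const_mul (175 * π)

theorem zero_mem_spectrum_cylinderOperator (hs : 0 < sin α) :
    (0 : ℂ) ∈ spectrum ℂ (cylinderOperator hs) :=
  (spectrum.isClosed _).mem_of_tendsto (tendsto_modalEigenvalue_atTop hs 0)
    (.of_forall fun n => modalEigenvalue_mem_spectrum_cylinderOperator hs n 0)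

theorem exists_modalEigenvalue_eq_of_mem_spectrum (hs : 0 < sin α) {z : ℂ}
    (hz : z ∈ spectrum ℂ (cylinderOperator hs)) (hz₀ : z ≠ 0) :
    ∃ n ξ, z = modalEigenvalue α n ξ := by
  obtain ⟨χ, hχc, hχ, rfl⟩ :=
    (isContractiveRep_translation (p := 2) volume ENNReal.ofNat_ne_top)
      |>.exists_addChar_integral_eq_of_mem_spectrum _ hz hz₀
  obtain ⟨n, ξ, rfl⟩ := exists_addChar_eq_mellinChar hχc hχ
  exact ⟨n, ξ, integral_toL1_cylinderKernel_mul_mellinChar hs n ξ⟩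

theorem spectrum_cylinderOperator (hs : 0 < sin α) :
    spectrum ℂ (cylinderOperator hs) = ⋃ n : ℤ, modalCurve α n := by
  refine Subset.antisymm (fun z hz => mem_iUnion.2 ?_) (iUnion_subset fun n => ?_)
  · rcases eq_or_ne z 0 with rfl | hz₀
    · exact ⟨0, .inr rfl⟩
    · obtain ⟨n, ξ, h⟩ := exists_modalEigenvalue_eq_of_mem_spectrum hs hz hz₀
      exact ⟨n, .inl ⟨ξ, h⟩⟩
  · rintro _ (⟨ξ, rfl⟩ | rfl)
    · exact modalEigenvalue_mem_spectrum_cylinderOperator hs n ξ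
    · exact zero_mem_spectrum_cylinderOperator hs

/-- The layer potential operator of the cone. -/
noncomputable def coneOperator (hs : 0 < sin α) :
    Lp ℂ 2 (muCone α) →L[ℂ] Lp ℂ 2 (muCone α) :=
  (isWeightedChange_coneCoord hs).pullback (cylinderOperator hs)

theorem isIntegralOperator_coneOperator (hs : 0 < sin α) :
    IsIntegralOperator (muCone α) (layerKernel α) (coneOperator hs) := by
  refine (isWeightedChange_coneCoord hs).isIntegralOperator_pullback ?_
  simp_rw [coneWeight_mul_layerKernel_mul_coneWeight hs]
  exact isIntegralOperator_convolutionOperator (integrable_cylinderKernel hs)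

theorem spectrum_coneOperator (hs : 0 < sin α) :
    spectrum ℂ (coneOperator hs) = ⋃ n : ℤ, modalCurve α n := by
  rw [← spectrum_cylinderOperator hs]
  exact AlgEquiv.spectrum_eq (isWeightedChange_coneCoord hs).pullback _

end Cone

end ConeLayerPotential

/-- The layer potential operator of the infinite straight cone on
`L²((0,∞)×(0,2π), sin α · t dt dθ)`: it is the unique bounded operator given a.e. by
`Kf(t,θ) = (1/(2π)) ∫₀^{2π} ∫₀^∞ K^{Γ_α}(t,θ,t',θ') f(t',θ') sin α t' dt' dθ'` (the
integral converging absolutely); its spectrum equals `⋃_{n∈ℤ} Π_n`, and there is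
`C > 0` depending only on `α` with `sup{|z| : z ∈ Π_n} ≤ C/(|n|+1)` for all `n`. -/
theorem cone_spectrum_L2 (α : ℝ) (hα0 : 0 < α) (hαπ : α < π) (hα2 : α ≠ π / 2) :
    ∃ K : Lp ℂ 2 (muCone α) →L[ℂ] Lp ℂ 2 (muCone α),
      (∀ f : Lp ℂ 2 (muCone α), ∀ᵐ p ∂(muCone α),
        IntegrableOn
          (fun q : ℝ × ℝ =>
            (coneKernel α p.1 p.2 q.1 q.2 : ℂ) * f q * ((sin α * q.1 : ℝ) : ℂ))
          (Set.Ioi (0:ℝ) ×ˢ Set.Ioo (0:ℝ) (2 * π)) ∧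
        (K f : ℝ × ℝ → ℂ) p = ((1 / (2 * π) : ℝ) : ℂ) *
          ∫ q in Set.Ioi (0:ℝ) ×ˢ Set.Ioo (0:ℝ) (2 * π),
            (coneKernel α p.1 p.2 q.1 q.2 : ℂ) * f q * ((sin α * q.1 : ℝ) : ℂ)) ∧
      (∀ K' : Lp ℂ 2 (muCone α) →L[ℂ] Lp ℂ 2 (muCone α),
        (∀ f : Lp ℂ 2 (muCone α), ∀ᵐ p ∂(muCone α),
          IntegrableOn
            (fun q : ℝ × ℝ =>
              (coneKernel α p.1 p.2 q.1 q.2 : ℂ) * f q * ((sin α * q.1 : ℝ) : ℂ))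
            (Set.Ioi (0:ℝ) ×ˢ Set.Ioo (0:ℝ) (2 * π)) ∧
          (K' f : ℝ × ℝ → ℂ) p = ((1 / (2 * π) : ℝ) : ℂ) *
            ∫ q in Set.Ioi (0:ℝ) ×ˢ Set.Ioo (0:ℝ) (2 * π),
              (coneKernel α p.1 p.2 q.1 q.2 : ℂ) * f q * ((sin α * q.1 : ℝ) : ℂ)) →
        K' = K) ∧
      spectrum ℂ K = (⋃ n : ℤ, modalCurve α n) ∧
      ∃ C : ℝ, 0 < C ∧ ∀ n : ℤ, ∀ z ∈ modalCurve α n, ‖z‖ ≤ C / ((n.natAbs : ℝ) + 1) := by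
  have hs : 0 < sin α := sin_pos_of_pos_of_lt_pi hα0 hαπ
  have hK := ConeLayerPotential.isIntegralOperator_coneOperator hs
  exact ⟨ConeLayerPotential.coneOperator hs,
    (ConeLayerPotential.isIntegralOperator_layerKernel_iff hs).1 hK,
    fun _ hK' => ((ConeLayerPotential.isIntegralOperator_layerKernel_iff hs).2 hK').unique hK,
    ConeLayerPotential.spectrum_coneOperator hs,
    175 * π, by positivity, fun _ _ hz => ConeLayerPotential.norm_le_of_mem_modalCurve hs hz⟩
end
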